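/- Let (G=(V,E),(J_v),(O_v),(T_{vu})) be a simple GIFS satisfying the strong separation condition (G.6)_S, the distortion conditions (G.7)_B and (G.7)_{BI}, and the summability condition (G.8)_{SV}. Then s̲ ≤ dim_H K, where s̲ := inf{s ≥ 0 : P(sφ̲) ≤ 0}. -/

import Mathlib

/-!
Let `s` be the exponent with `P(s φ̲) = 0` provided by the summability condition; it bounds the
infimum from above, so it suffices to prove `t ≤ dim_H K` whenever `0 < t < s`. The graph is not
assumed to be strongly connected, and no equilibrium state is used. The argument is by
contradiction and counts loops.

*Loops bound the dimension from below.* Consider finitely many distinct loops of common length `m`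
at a vertex `f`, with contraction rates at least `lam i`. Concatenating them freely embeds a full
shift on a finite alphabet into the code space. Strong separation and compactness separate points
whose first blocks differ, and the expansion estimate `wcomp_expand` (which rests on the distortion
condition for `‖·‖_i` and on `half_mul_min_le_dist`) carries this separation to all levels. If
`∑ lam i ^ t ≥ 1`, the mass distribution principle for a Bernoulli measure gives `t ≤ dim_H K`
(`le_dimH_of_loops`).

*Few loops make the pressure negative.* If `t ≤ dim_H K` fails, then every such sum is `< 1`, so by
bounded distortion the `t`-weights of all loops of length `m` at `f` have a sum bounded
independently of `m` (`tsum_loops_le`). Since `φ̲ ≤ log r < 0` and `t < s`, the generating function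
of the `s`-weights of the loops at `f` converges at some `z > 1` that does not depend on `f`
(`loopSum_ne_top`). By summability of the letter weights, all but finitely many letters have total
weight `≤ 1 / (2 z)`, so the words avoiding a finite set `F` of letters have a finite generating
function at `z`. Adding a letter `v` of `F` keeps it finite: a word containing `v` splits at the
first and the last occurrence of `v` (`wordSum_insert_le`). Hence the generating function of all
words is finite at `z` (`tsum_wordWeight_ne_top`), which forces `P(s φ̲) < 0` (`pressure_neg`).

In dimension `0` the norm `‖·‖_i` takes the junk value `0`; then `φ̲ = 0` and the infimum is `0`.
-/

open scoped ENNReal NNReal Topology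
open Filter Set Metric

noncomputable section

/-- The shift transformation on one-sided sequences. -/
def shift {S : Type*} (ω : ℕ → S) : ℕ → S := fun n => ω (n + 1)

/-- The topological Markov shift with transition `A`. -/
def TMS {S : Type*} (A : S → S → Prop) : Set (ℕ → S) := {ω | ∀ n, A (ω n) (ω (n + 1))}

/-- The cylinder set of a word `w` inside the TMS with transition `A`. -/
def cylSet {S : Type*} (A : S → S → Prop) (n : ℕ) (w : Fin n → S) : Set (ℕ → S) :=
  {ω | ω ∈ TMS A ∧ ∀ i : Fin n, ω i = w i}

/-- Birkhoff sum `S_n f`. -/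
def birkhoff {S : Type*} (f : (ℕ → S) → ℝ) (n : ℕ) (ω : ℕ → S) : ℝ :=
  ∑ i ∈ Finset.range n, f (shift^[i] ω)

/-- Partition function `Z_n(f) = Σ_w sup_{ω ∈ [w]} exp (S_n f ω)`
(the supremum of `exp` coincides with `exp` of the supremum; empty cylinders contribute `0`). -/
def pressureZ {S : Type*} (A : S → S → Prop) (f : (ℕ → S) → ℝ) (n : ℕ) : ℝ≥0∞ :=
  ∑' w : Fin n → S, ⨆ ω ∈ cylSet A n w, ENNReal.ofReal (Real.exp (birkhoff f n ω))

/-- Logarithm `ℝ≥0∞ → EReal`, with `log 0 = ⊥` and `log ⊤ = ⊤`. -/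
def elog (x : ℝ≥0∞) : EReal :=
  if x = 0 then ⊥ else if x = ⊤ then ⊤ else ((Real.log x.toReal : ℝ) : EReal)

/-- The topological pressure `P(f) = lim (1/n) log Z_n(f)` (as a limsup, which equals the
limit whenever the limit exists). -/
def pressure {S : Type*} (A : S → S → Prop) (f : (ℕ → S) → ℝ) : EReal :=
  Filter.limsup (fun n : ℕ => ((n : ℝ)⁻¹ : EReal) * elog (pressureZ A f n)) Filter.atTop

/-- A potential is summable if `Σ_s exp (sup_{[s]} f) < ∞`. -/
def SummablePot {S : Type*} (A : S → S → Prop) (f : (ℕ → S) → ℝ) : Prop :=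
  pressureZ A f 1 ≠ ⊤

/-- There is an `A`-admissible word of length `≥ 2` from `a` to `b`. -/
def Chain {S : Type*} (A : S → S → Prop) (a b : S) : Prop :=
  ∃ (m : ℕ) (w : ℕ → S), 1 ≤ m ∧ w 0 = a ∧ w m = b ∧ ∀ i < m, A (w i) (w (i + 1))

/-- Restriction of a transition matrix to a set of states. -/
def restrictT {S : Type*} (A : S → S → Prop) (C : Set S) : S → S → Prop :=
  fun i j => A i j ∧ i ∈ C ∧ j ∈ C

/-- The communication class (the class of `a` under `↔`). -/
def commClass {S : Type*} (A : S → S → Prop) (a : S) : Set S :=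
  {b | a = b ∨ (Chain A a b ∧ Chain A b a)}

end
noncomputable section

/-- The ambient Euclidean space `ℝ^D`. -/
abbrev Pt (D : ℕ) := EuclideanSpace ℝ (Fin D)

/-- `‖A‖_i = ‖A⁻¹‖⁻¹` for an invertible continuous linear map (junk value otherwise). -/
def inorm {D : ℕ} (A : Pt D →L[ℝ] Pt D) : ℝ := ‖Ring.inverse A‖⁻¹

/-- A simple graph-directed iterated function system (GIFS) in `ℝ^D` on the vertex set `V`,
with edge relation `E`, seed sets `J`, open sets `O` and contractions `T`. -/
structure SGIFS (D : ℕ) (V : Type*) where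
  E : V → V → Prop
  J : V → Set (Pt D)
  O : V → Set (Pt D)
  T : V → V → Pt D → Pt D
  r : ℝ
  hr : r < 1
  J_cpt : ∀ v, IsCompact (J v)
  J_conn : ∀ v, IsConnected (J v)
  J_reg : ∀ v, J v = closure (interior (J v))
  J_diam : ∃ c : ℝ, ∀ v, Metric.diam (J v) ≤ c
  O_open : ∀ v, IsOpen (O v)
  O_bdd : ∀ v, Bornology.IsBounded (O v)
  O_conn : ∀ v, IsConnected (O v)
  hJO : ∃ c > 0, ∀ v, ∀ x ∈ J v, ∀ y ∉ O v, c ≤ dist x y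
  T_diff : ∀ ⦃v u⦄, E v u → ContDiffOn ℝ 1 (T v u) (O u)
  T_inj : ∀ ⦃v u⦄, E v u → Set.InjOn (T v u) (O u)
  T_openim : ∀ ⦃v u⦄, E v u → IsOpen (T v u '' O u)
  T_sub : ∀ ⦃v u⦄, E v u → T v u '' O u ⊆ O v
  T_J : ∀ ⦃v u⦄, E v u → T v u '' J u ⊆ J v
  T_unit : ∀ ⦃v u⦄, E v u → ∀ x ∈ O u, IsUnit (fderiv ℝ (T v u) x)
  T_contr : ∀ ⦃v u⦄, E v u → ∀ x ∈ O u, ‖fderiv ℝ (T v u) x‖ ≤ r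

/-- Composition `T_{ω₀ω₁} ∘ ⋯ ∘ T_{ω_{k-1}ω_k}` along a sequence (identity for `k = 0`). -/
def vcomp {D : ℕ} {V : Type*} (T : V → V → Pt D → Pt D) (ω : ℕ → V) : ℕ → Pt D → Pt D
  | 0 => id
  | k + 1 => vcomp T ω k ∘ T (ω k) (ω (k + 1))

/-- `π` is the coding map of the simple system `(Ed, J, T)`:
`{π ω} = ⋂_{k ≥ 1} T_{ω₀ω₁} ∘ ⋯ ∘ T_{ω_{k-1}ω_k} (J_{ω_k})`. -/
def IsCodingMap {D : ℕ} {V : Type*} (Ed : V → V → Prop) (J : V → Set (Pt D))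
    (T : V → V → Pt D → Pt D) (π : (ℕ → V) → Pt D) : Prop :=
  ∀ ω ∈ {ω : ℕ → V | ∀ n, Ed (ω n) (ω (n + 1))},
    (⋂ k : ℕ, vcomp T ω (k + 1) '' J (ω (k + 1))) = {π ω}

/-- `pcomp T w j m = T_{w_j w_{j+1}} ∘ ⋯ ∘ T_{w_{j+m-1} w_{j+m}}` (identity for `m = 0`). -/
def pcomp {D : ℕ} {V : Type*} (T : V → V → Pt D → Pt D) (w : ℕ → V) : ℕ → ℕ → Pt D → Pt D
  | _, 0 => id
  | j, m + 1 => T (w j) (w (j + 1)) ∘ pcomp T w (j + 1) m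

/-- The potential `φ(ω) = log ‖T'_{ω₀ω₁}(π(σω))‖`. -/
def phiU {D : ℕ} {V : Type*} (T : V → V → Pt D → Pt D) (π : (ℕ → V) → Pt D)
    (ω : ℕ → V) : ℝ :=
  Real.log ‖fderiv ℝ (T (ω 0) (ω 1)) (π (fun n => ω (n + 1)))‖

/-- The potential `φ̲(ω) = log ‖T'_{ω₀ω₁}(π(σω))‖_i`. -/
def phiL {D : ℕ} {V : Type*} (T : V → V → Pt D → Pt D) (π : (ℕ → V) → Pt D)
    (ω : ℕ → V) : ℝ :=
  Real.log (inorm (fderiv ℝ (T (ω 0) (ω 1)) (π (fun n => ω (n + 1)))))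

/-- Conformality condition `(G.5)_C`. -/
def CondConf {D : ℕ} {V : Type*} (Ed : V → V → Prop) (O : V → Set (Pt D))
    (T : V → V → Pt D → Pt D) : Prop :=
  ∀ ⦃v u⦄, Ed v u → ∀ x ∈ O u, IsConformalMap (fderiv ℝ (T v u) x)

/-- Strong separation condition `(G.6)_S` relative to a limit set `K`. -/
def CondSSC {D : ℕ} {V : Type*} (Ed : V → V → Prop) (J : V → Set (Pt D))
    (T : V → V → Pt D → Pt D) (K : Set (Pt D)) : Prop :=
  ∀ ⦃v u v' u'⦄, Ed v u → Ed v' u' → (v, u) ≠ (v', u') →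
    (T v u '' (J u ∩ K)) ∩ (T v' u' '' (J u' ∩ K)) = ∅

/-- Open set condition `(G.6)_O`. -/
def CondOSC {D : ℕ} {V : Type*} (Ed : V → V → Prop) (J : V → Set (Pt D))
    (T : V → V → Pt D → Pt D) : Prop :=
  ∀ ⦃v u v' u'⦄, Ed v u → Ed v' u' → (v, u) ≠ (v', u') →
    (T v u '' interior (J u)) ∩ (T v' u' '' interior (J u')) = ∅

/-- Bounded distortion `(G.7)_B`. -/
def CondBD {D : ℕ} {V : Type*} (Ed : V → V → Prop) (O : V → Set (Pt D))
    (T : V → V → Pt D → Pt D) : Prop :=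
  ∃ c > 0, ∃ β ∈ Set.Ioc (0 : ℝ) 1, ∀ ⦃v u⦄, Ed v u → ∀ x ∈ O u, ∀ y ∈ O u,
    |‖fderiv ℝ (T v u) x‖ - ‖fderiv ℝ (T v u) y‖| ≤
      c * ‖fderiv ℝ (T v u) x‖ * dist x y ^ β

/-- Bounded distortion for inverse maps `(G.7)_{BI}`. -/
def CondBDI {D : ℕ} {V : Type*} (Ed : V → V → Prop) (O : V → Set (Pt D))
    (T : V → V → Pt D → Pt D) : Prop :=
  ∃ c > 0, ∃ β ∈ Set.Ioc (0 : ℝ) 1, ∀ ⦃v u⦄, Ed v u → ∀ x ∈ O u, ∀ y ∈ O u,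
    |inorm (fderiv ℝ (T v u) x) - inorm (fderiv ℝ (T v u) y)| ≤
      c * inorm (fderiv ℝ (T v u) x) * dist x y ^ β

/-- Contractibility of the seed sets `(G.9)_J`. -/
def CondG9 {D : ℕ} {V : Type*} (Ed : V → V → Prop) (J : V → Set (Pt D))
    (T : V → V → Pt D → Pt D) : Prop :=
  ∃ c > 0, ∀ v, Metric.diam (J v) ≤
    c * sSup {t : ℝ | ∃ u, Ed v u ∧ ∃ z ∈ J u, t = ‖fderiv ℝ (T v u) z‖}

/-- The summability interval `Ī^V` relative to the limit set `K`. -/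
def IbarSet {D : ℕ} {V : Type*} (Ed : V → V → Prop) (J : V → Set (Pt D))
    (T : V → V → Pt D → Pt D) (K : Set (Pt D)) : Set ℝ :=
  {s | 0 ≤ s ∧
    (∑' v : V, ⨆ (u : V) (_ : Ed v u) (x : Pt D) (_ : x ∈ K ∩ J u),
      ENNReal.ofReal (inorm (fderiv ℝ (T v u) x) ^ s)) ≠ ⊤}

end

noncomputable section

/-- Summability condition `(G.8)_{SV}`: some `s ∈ Ī^V` satisfies `P(s φ̲) = 0`. -/
def CondG8 {D : ℕ} {V : Type*} (Ed : V → V → Prop) (J : V → Set (Pt D))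
    (T : V → V → Pt D → Pt D) (π : (ℕ → V) → Pt D) : Prop :=
  ∃ s ∈ IbarSet Ed J T (π '' TMS Ed), pressure Ed (fun ω => s * phiL T π ω) = 0

/-- A set of vertices is strongly connected (with edges restricted to it). -/
def SCOn {V : Type*} (Ed : V → V → Prop) (C : Set V) : Prop :=
  ∀ v ∈ C, ∀ u ∈ C, Chain (restrictT Ed C) v u

/-- A strongly connected component: a maximal strongly connected set of vertices. -/
def IsSCC {V : Type*} (Ed : V → V → Prop) (C : Set V) : Prop :=
  SCOn Ed C ∧ ∀ C', C ⊆ C' → SCOn Ed C' → C' = C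

end

/-! ### Expansion and oscillation estimates for `C¹` maps -/

/-- Quantitative injectivity for a `C¹` map expanding by at least `m` infinitesimally on a ball.
Since no bound on the variation of the derivative is available, the segment from `g x` to `g y` is
lifted to a curve of length at most `2 * dist (g x) (g y) / m` by continuous induction. -/
lemma half_mul_min_le_dist {D : ℕ} {g : Pt D → Pt D} {O : Set (Pt D)} (hO : IsOpen O)
    (hg : ContDiffOn ℝ 1 g O) (hinj : InjOn g O) {x y : Pt D} {ρ m : ℝ}
    (hball : ball x ρ ⊆ O) (hm0 : 0 < m)
    (hm : ∀ p ∈ ball x ρ, ∀ v, m * ‖v‖ ≤ ‖fderiv ℝ g p v‖) (hy : y ∈ O) :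
    m / 2 * min (dist x y) ρ ≤ dist (g x) (g y) := by
  by_contra! hcon
  set R : ℝ := dist (g x) (g y) / (m / 2) with hR
  have hR0 : 0 ≤ R := by positivity
  have hRd : m / 2 * R = dist (g x) (g y) := by rw [hR]; field_simp
  have hRmin : R < min (dist x y) ρ := by
    rw [hR, div_lt_iff₀ (by positivity)]; linarith
  have hRρ : R < ρ := hRmin.trans_le (min_le_right _ _)
  have hcb : closedBall x R ⊆ ball x ρ := closedBall_subset_ball hRρ
  have hcont : ContinuousOn g (closedBall x R) := hg.continuousOn.mono (hcb.trans hball)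
  let γ : ℝ → Pt D := fun τ => g x + τ • (g y - g x)
  have hγ : Continuous γ := by fun_prop
  let B : Set (ℝ × Pt D) := {q | q ∈ Icc (0:ℝ) 1 ×ˢ closedBall x R ∧ g q.2 = γ q.1 ∧
    dist q.2 x ≤ R * q.1}
  let A : Set ℝ := Prod.fst '' B
  have hBc : IsCompact B := by
    have hK : IsCompact (Icc (0:ℝ) 1 ×ˢ closedBall x R) :=
      isCompact_Icc.prod (isCompact_closedBall x R)
    have h1 : IsClosed {q : ℝ × Pt D | q ∈ Icc (0:ℝ) 1 ×ˢ closedBall x R ∧ g q.2 = γ q.1} := by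
      have : ContinuousOn (fun q : ℝ × Pt D => (g q.2, γ q.1)) (Icc (0:ℝ) 1 ×ˢ closedBall x R) := by
        refine ContinuousOn.prodMk (hcont.comp continuousOn_snd ?_) (by fun_prop)
        intro q hq; exact hq.2
      exact this.preimage_isClosed_of_isClosed hK.isClosed
        (isClosed_eq continuous_fst continuous_snd : IsClosed {z : Pt D × Pt D | z.1 = z.2})
    have h2 : IsClosed {q : ℝ × Pt D | dist q.2 x ≤ R * q.1} :=
      isClosed_le (by fun_prop) (by fun_prop)
    refine hK.of_isClosed_subset ?_ (fun q hq => hq.1)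
    convert! h1.inter h2 using 1
    ext q; simp only [B, mem_ofPred_eq, mem_inter_iff]; tauto
  have hAc : IsClosed A := (hBc.image continuous_fst).isClosed
  have key : Icc (0:ℝ) 1 ⊆ A := by
    refine IsClosed.Icc_subset_of_forall_exists_gt (hAc.inter isClosed_Icc) ?_ ?_
    · exact ⟨(0, x), ⟨⟨by simp, by simpa using hR0⟩, by simp [γ], by simp⟩, rfl⟩
    · rintro τ ⟨⟨⟨τ', p⟩, ⟨⟨hτ1, hpR⟩, hgp, hpd⟩, rfl⟩, hτ0, hτ2⟩ τ'' hτ''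
      dsimp only at *
      have hpb : p ∈ ball x ρ := hcb hpR
      have hpO : p ∈ O := hball hpb
      have hstrict : HasStrictFDerivAt g (fderiv ℝ g p) p :=
        (hg.contDiffAt (hO.mem_nhds hpO)).hasStrictFDerivAt one_ne_zero
      have hinjD : Function.Injective (fderiv ℝ g p) := by
        rw [injective_iff_map_eq_zero]
        intro v hv
        have := hm p hpb v
        rw [hv, norm_zero] at this
        have h0 : ‖v‖ ≤ 0 := by
          by_contra! h; nlinarith
        simpa using h0
      have hsurj : (fderiv ℝ g p).range = ⊤ := by
        rw [LinearMap.range_eq_top]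
        exact LinearMap.injective_iff_surjective.1 hinjD
      have hmap := hstrict.map_nhds_eq_of_surj hsurj
      -- near `p` the map `g` expands distances to `p` by at least `m / 2`
      have hexp : ∀ᶠ q in 𝓝 p, m / 2 * dist q p ≤ dist (g q) (g p) := by
        have := hstrict.hasFDerivAt.isLittleO.def (show 0 < m / 2 by positivity)
        filter_upwards [this] with q hq
        have h1 := hm p hpb (q - p)
        rw [dist_eq_norm, dist_eq_norm]
        have h2 : ‖fderiv ℝ g p (q - p)‖ ≤ ‖g q - g p‖ + ‖g q - g p - fderiv ℝ g p (q - p)‖ := by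
          have := norm_sub_le (g q - g p) (g q - g p - fderiv ℝ g p (q - p))
          simpa using this
        linarith
      have himg : g '' {q | m / 2 * dist q p ≤ dist (g q) (g p)} ∈ 𝓝 (γ τ') := by
        rw [← hgp, ← hmap]; exact image_mem_map hexp
      have hev : ∀ᶠ t in 𝓝[>] τ', γ t ∈ g '' {q | m / 2 * dist q p ≤ dist (g q) (g p)} :=
        (hγ.continuousAt.eventually himg).filter_mono nhdsWithin_le_nhds
      have hev2 : ∀ᶠ t in 𝓝[>] τ', t ∈ Ioo τ' (min τ'' 1) :=
        Ioo_mem_nhdsGT (lt_min hτ'' hτ2)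
      obtain ⟨t, ⟨q, hq, hqt⟩, ht1, ht2⟩ := (hev.and hev2).exists
      have ht2a := ht2.trans_le (min_le_left _ _)
      have ht2b := ht2.trans_le (min_le_right _ _)
      have hdq : dist q p ≤ R * (t - τ') := by
        have h3 : dist (g q) (g p) = (t - τ') * dist (g x) (g y) := by
          rw [hqt, hgp, dist_eq_norm]
          have : γ t - γ τ' = (t - τ') • (g y - g x) := by simp only [γ]; module
          rw [this, norm_smul, Real.norm_of_nonneg (by linarith), dist_comm, dist_eq_norm]
        have h4 : m / 2 * dist q p ≤ m / 2 * (R * (t - τ')) := by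
          calc _ ≤ dist (g q) (g p) := hq
            _ = _ := by rw [h3, ← hRd]; ring
        exact le_of_mul_le_mul_left h4 (by positivity)
      have hqx : dist q x ≤ R * t := by
        calc dist q x ≤ dist q p + dist p x := dist_triangle _ _ _
          _ ≤ R * (t - τ') + R * τ' := add_le_add hdq hpd
          _ = R * t := by ring
      refine ⟨t, ⟨(t, q), ⟨⟨⟨by dsimp only; linarith, ht2b.le⟩, ?_⟩, hqt, hqx⟩, rfl⟩, ht1, ht2a.le⟩
      simp only [mem_closedBall]
      nlinarith
  obtain ⟨⟨τ, p⟩, ⟨⟨-, hpR⟩, hgp, -⟩, hτ⟩ := key (right_mem_Icc.2 zero_le_one)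
  dsimp only at *
  subst hτ
  have hpy : p = y := hinj (hball (hcb hpR)) hy (by rw [hgp]; simp [γ])
  subst hpy
  rw [mem_closedBall, dist_comm] at hpR
  exact absurd (hRmin.trans_le (min_le_left _ _)) (not_lt.2 hpR)

/-- A compact connected set has finite intrinsic diameter inside an open neighbourhood: the
oscillation over `J` of a map with derivative bounded by `κ` on `O` is at most `κ * M`. -/
lemma exists_osc_bound {D : ℕ} {J O : Set (Pt D)} (hJ : IsCompact J) (hJc : IsConnected J)
    (hO : IsOpen O) (hJO : J ⊆ O) :
    ∃ M : ℝ, 0 < M ∧ ∀ (g : Pt D → Pt D) (κ : ℝ), 0 ≤ κ →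
      (∀ p ∈ O, DifferentiableAt ℝ g p ∧ ‖fderiv ℝ g p‖ ≤ κ) →
      ∀ x ∈ J, ∀ y ∈ J, dist (g x) (g y) ≤ κ * M := by
  have hloc : ∀ x ∈ J, ∃ ε > 0, ∀ y ∈ ball x ε, ∀ (g : Pt D → Pt D) (κ : ℝ), 0 ≤ κ →
      (∀ p ∈ O, DifferentiableAt ℝ g p ∧ ‖fderiv ℝ g p‖ ≤ κ) → dist (g x) (g y) ≤ κ * ε := by
    intro x hx
    obtain ⟨ε, hε, hb⟩ := Metric.isOpen_iff.1 hO x (hJO hx)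
    refine ⟨ε, hε, fun y hy g κ hκ hg => ?_⟩
    have := (convex_ball x ε).norm_image_sub_le_of_norm_fderiv_le
      (fun p hp => (hg p (hb hp)).1) (fun p hp => (hg p (hb hp)).2) (mem_ball_self hε) hy
    rw [dist_comm, dist_eq_norm]
    refine this.trans (mul_le_mul_of_nonneg_left ?_ hκ)
    rw [← dist_eq_norm]; exact (mem_ball.1 hy).le
  have hpair : ∀ x ∈ J, ∀ y ∈ J, ∃ M : ℝ, ∀ (g : Pt D → Pt D) (κ : ℝ), 0 ≤ κ →
      (∀ p ∈ O, DifferentiableAt ℝ g p ∧ ‖fderiv ℝ g p‖ ≤ κ) → dist (g x) (g y) ≤ κ * M := by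
    intro x hx y hy
    refine hJc.isPreconnected.induction₂ (fun x y => ∃ M : ℝ, ∀ (g : Pt D → Pt D) (κ : ℝ), 0 ≤ κ →
      (∀ p ∈ O, DifferentiableAt ℝ g p ∧ ‖fderiv ℝ g p‖ ≤ κ) → dist (g x) (g y) ≤ κ * M)
      ?_ ?_ ?_ hx hy
    · intro x hx
      obtain ⟨ε, hε, h⟩ := hloc x hx
      filter_upwards [mem_nhdsWithin_of_mem_nhds (ball_mem_nhds x hε)] with y hy
      exact ⟨ε, h y hy⟩
    · rintro x y z - - - ⟨M, hM⟩ ⟨M', hM'⟩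
      refine ⟨M + M', fun g κ hκ hg => ?_⟩
      have := dist_triangle (g x) (g y) (g z)
      have := hM g κ hκ hg
      have := hM' g κ hκ hg
      linarith
    · rintro x y - - ⟨M, hM⟩
      exact ⟨M, fun g κ hκ hg => by rw [dist_comm]; exact hM g κ hκ hg⟩
  obtain ⟨x₀, hx₀⟩ := hJc.nonempty
  have hfrom : ∃ M : ℝ, ∀ y ∈ J, ∀ (g : Pt D → Pt D) (κ : ℝ), 0 ≤ κ →
      (∀ p ∈ O, DifferentiableAt ℝ g p ∧ ‖fderiv ℝ g p‖ ≤ κ) → dist (g x₀) (g y) ≤ κ * M := by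
    refine hJ.induction_on (p := fun S => ∃ M : ℝ, ∀ y ∈ S, ∀ (g : Pt D → Pt D) (κ : ℝ), 0 ≤ κ →
      (∀ p ∈ O, DifferentiableAt ℝ g p ∧ ‖fderiv ℝ g p‖ ≤ κ) → dist (g x₀) (g y) ≤ κ * M) ?_ ?_ ?_ ?_
    · exact ⟨0, by simp⟩
    · rintro s t hst ⟨M, hM⟩; exact ⟨M, fun y hy => hM y (hst hy)⟩
    · rintro s t ⟨M, hM⟩ ⟨M', hM'⟩
      refine ⟨max M M', fun y hy g κ hκ hg => ?_⟩
      rcases hy with hy | hy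
      · exact (hM y hy g κ hκ hg).trans (mul_le_mul_of_nonneg_left (le_max_left _ _) hκ)
      · exact (hM' y hy g κ hκ hg).trans (mul_le_mul_of_nonneg_left (le_max_right _ _) hκ)
    · intro x hx
      obtain ⟨M, hM⟩ := hpair x₀ hx₀ x hx
      obtain ⟨ε, hε, h⟩ := hloc x hx
      refine ⟨ball x ε, mem_nhdsWithin_of_mem_nhds (ball_mem_nhds x hε), M + ε,
        fun y hy g κ hκ hg => ?_⟩
      have := dist_triangle (g x₀) (g x) (g y)
      have := hM g κ hκ hg
      have := h y hy g κ hκ hg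
      linarith
  obtain ⟨M, hM⟩ := hfrom
  refine ⟨max (M + M) 1, by positivity, fun g κ hκ hg x hx y hy => ?_⟩
  have h1 := dist_triangle_left (g x) (g y) (g x₀)
  have h2 := hM x hx g κ hκ hg
  have h3 := hM y hy g κ hκ hg
  calc _ ≤ κ * (M + M) := by linarith
    _ ≤ _ := mul_le_mul_of_nonneg_left (le_max_left _ _) hκ

lemma inorm_mul_norm_le {D : ℕ} {A : Pt D →L[ℝ] Pt D} (hA : IsUnit A) (v : Pt D) :
    inorm A * ‖v‖ ≤ ‖A v‖ := by
  have h : v = Ring.inverse A (A v) := by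
    rw [← mul_apply_eq_comp, Ring.inverse_mul_cancel _ hA]; rfl
  have h2 : ‖v‖ ≤ ‖Ring.inverse A‖ * ‖A v‖ := by
    conv_lhs => rw [h]
    exact ContinuousLinearMap.le_opNorm _ _
  rw [inorm]
  rcases (norm_nonneg (Ring.inverse A)).eq_or_lt with h0 | h0
  · rw [← h0]; simp
  · rw [inv_mul_le_iff₀ h0]; exact h2

lemma inorm_pos {D : ℕ} (hD : D ≠ 0) {A : Pt D →L[ℝ] Pt D} (hA : IsUnit A) : 0 < inorm A := by
  have : NeZero D := ⟨hD⟩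
  have : Nontrivial (Pt D) := inferInstance
  rw [inorm, inv_pos, norm_pos_iff]
  intro h
  have h1 := Ring.inverse_mul_cancel _ hA
  rw [h, zero_mul] at h1
  exact zero_ne_one h1

lemma inorm_le_norm {D : ℕ} (hD : D ≠ 0) {A : Pt D →L[ℝ] Pt D} (hA : IsUnit A) :
    inorm A ≤ ‖A‖ := by
  have : NeZero D := ⟨hD⟩
  obtain ⟨v, hv⟩ := exists_ne (0 : Pt D)
  have h1 := (inorm_mul_norm_le hA v).trans (A.le_opNorm v)
  exact le_of_mul_le_mul_right h1 (norm_pos_iff.2 hv)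

/-! ### Coding map and bounded distortion -/

section Coding

variable {D : ℕ} {V : Type*}

/-- The composition `T_{ω₀ω₁} ∘ ⋯ ∘ T_{ω_{m-1}ω_m}`, defined by peeling off the outermost map, so
that proofs by induction on `m` pass from `ω` to its shift. -/
def wcomp (T : V → V → Pt D → Pt D) : ℕ → (ℕ → V) → Pt D → Pt D
  | 0, _ => id
  | m + 1, ω => T (ω 0) (ω 1) ∘ wcomp T m (shift ω)

lemma shift_iterate_apply (ω : ℕ → V) (m n : ℕ) : (shift^[m] ω) n = ω (n + m) := by
  induction m generalizing ω with
  | zero => rfl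
  | succ m ih => rw [Function.iterate_succ_apply, ih]; simp only [shift]; congr 1

lemma birkhoff_succ (f : (ℕ → V) → ℝ) (m : ℕ) (ω : ℕ → V) :
    birkhoff f (m + 1) ω = f ω + birkhoff f m (shift ω) := by
  simp only [birkhoff, Finset.sum_range_succ', Function.iterate_succ_apply]
  rw [add_comm]; rfl

lemma birkhoff_add (f : (ℕ → V) → ℝ) (m n : ℕ) (ω : ℕ → V) :
    birkhoff f (m + n) ω = birkhoff f m ω + birkhoff f n (shift^[m] ω) := by
  simp only [birkhoff, Finset.sum_range_add]
  congr 1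
  refine Finset.sum_congr rfl fun i _ => ?_
  rw [← Function.iterate_add_apply, add_comm]

lemma shift_mem_TMS {A : V → V → Prop} {ω : ℕ → V} (h : ω ∈ TMS A) : shift ω ∈ TMS A :=
  fun n => h (n + 1)

lemma shift_iterate_mem_TMS {A : V → V → Prop} {ω : ℕ → V} (h : ω ∈ TMS A) (m : ℕ) :
    shift^[m] ω ∈ TMS A := by
  induction m generalizing ω with
  | zero => exact h
  | succ m ih => rw [Function.iterate_succ_apply]; exact ih (shift_mem_TMS h)

lemma wcomp_congr (T : V → V → Pt D → Pt D) {m : ℕ} {ω ω' : ℕ → V}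
    (h : ∀ i ≤ m, ω i = ω' i) : wcomp T m ω = wcomp T m ω' := by
  induction m generalizing ω ω' with
  | zero => rfl
  | succ m ih =>
    simp only [wcomp]
    rw [ih (ω := shift ω) (ω' := shift ω') (fun i hi => h (i + 1) (by omega)), h 0 (by omega),
      h 1 (by omega)]

lemma vcomp_succ_shift (T : V → V → Pt D → Pt D) (ω : ℕ → V) (k : ℕ) :
    vcomp T ω (k + 1) = T (ω 0) (ω 1) ∘ vcomp T (shift ω) k := by
  induction k with
  | zero => rfl
  | succ k ih => rw [vcomp, ih]; rfl

/-- Uniform constants of a simple GIFS with `D ≥ 1`: a contraction ratio `r ∈ (0, 1)`, the constant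
`c` and exponent `β` of bounded distortion for `‖·‖_i`, and a radius `ρ` such that `O v` contains
the `ρ`-neighbourhood of `J v`. -/
structure GConst (G : SGIFS D V) where
  r : ℝ
  c : ℝ
  β : ℝ
  ρ : ℝ
  D_ne : D ≠ 0
  r_pos : 0 < r
  r_lt : r < 1
  contr : ∀ ⦃v u⦄, G.E v u → ∀ x ∈ G.O u, ‖fderiv ℝ (G.T v u) x‖ ≤ r
  c_pos : 0 < c
  β_pos : 0 < β
  dist_inorm : ∀ ⦃v u⦄, G.E v u → ∀ x ∈ G.O u, ∀ y ∈ G.O u,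
    |inorm (fderiv ℝ (G.T v u) x) - inorm (fderiv ℝ (G.T v u) y)| ≤
      c * inorm (fderiv ℝ (G.T v u) x) * dist x y ^ β
  ρ_pos : 0 < ρ
  ball_sub : ∀ v, ∀ x ∈ G.J v, ball x ρ ⊆ G.O v

lemma exists_gconst (G : SGIFS D V) (hD : D ≠ 0) (hBDI : CondBDI G.E G.O G.T) :
    Nonempty (GConst G) := by
  obtain ⟨c, hc, β, hβ, h⟩ := hBDI
  obtain ⟨ρ, hρ, hJO⟩ := G.hJO
  refine ⟨⟨max G.r (1 / 2), c, β, ρ, hD, by positivity, max_lt G.hr (by norm_num),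
    fun v u hvu x hx => (G.T_contr hvu x hx).trans (le_max_left _ _), hc, hβ.1, h, hρ,
    fun v x hx y hy => ?_⟩⟩
  by_contra hyO
  have := hJO v x hx y hyO
  rw [mem_ball, dist_comm] at hy
  linarith

namespace GConst

variable {G : SGIFS D V}

lemma J_sub_O (k : GConst G) (v : V) : G.J v ⊆ G.O v :=
  fun x hx => k.ball_sub v x hx (mem_ball_self k.ρ_pos)

lemma inorm_pos (k : GConst G) {v u : V} (h : G.E v u) {x : Pt D} (hx : x ∈ G.O u) :
    0 < inorm (fderiv ℝ (G.T v u) x) := _root_.inorm_pos k.D_ne (G.T_unit h x hx)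

lemma log_inorm_sub_le (k : GConst G) {v u : V} (h : G.E v u) {x y : Pt D} (hx : x ∈ G.O u)
    (hy : y ∈ G.O u) :
    Real.log (inorm (fderiv ℝ (G.T v u) y)) - Real.log (inorm (fderiv ℝ (G.T v u) x)) ≤
      k.c * dist x y ^ k.β := by
  have hxp := k.inorm_pos h hx
  have hyp := k.inorm_pos h hy
  have h1 := (abs_le.1 (k.dist_inorm h x hx y hy)).1
  rw [← Real.log_div hyp.ne' hxp.ne']
  have h2 := Real.log_le_sub_one_of_pos (div_pos hyp hxp)
  refine h2.trans ?_
  rw [sub_le_iff_le_add, div_le_iff₀ hxp]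
  nlinarith

/-- Bound for the accumulated distortion along an orbit of arbitrary length whose terminal points
have intrinsic distance at most `M`. -/
noncomputable def distortion (k : GConst G) (M : ℝ) : ℝ := k.c * M ^ k.β * (1 - k.r ^ k.β)⁻¹

lemma sum_distortion_le (k : GConst G) {M : ℝ} (hM : 0 ≤ M) (m : ℕ) :
    ∑ i ∈ Finset.range m, k.c * (k.r ^ i * M) ^ k.β ≤ k.distortion M := by
  have hq0 : 0 ≤ k.r ^ k.β := Real.rpow_nonneg k.r_pos.le _
  have hq1 : k.r ^ k.β < 1 := Real.rpow_lt_one k.r_pos.le k.r_lt k.β_pos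
  have h1 : ∀ i, k.c * (k.r ^ i * M) ^ k.β = k.c * M ^ k.β * (k.r ^ k.β) ^ i := by
    intro i
    rw [Real.mul_rpow (pow_nonneg k.r_pos.le _) hM, ← Real.rpow_natCast, ← Real.rpow_natCast,
      ← Real.rpow_mul k.r_pos.le, ← Real.rpow_mul k.r_pos.le, mul_comm (i : ℝ)]
    ring
  simp only [h1, ← Finset.mul_sum]
  refine mul_le_mul_of_nonneg_left ?_ (mul_nonneg k.c_pos.le (Real.rpow_nonneg hM _))
  rw [← tsum_geometric_of_lt_one hq0 hq1]
  exact (summable_geometric_of_lt_one hq0 hq1).sum_le_tsum _ (fun i _ => pow_nonneg hq0 _)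

end GConst

variable {G : SGIFS D V} {π : (ℕ → V) → Pt D}

lemma coding_mem_J (hπ : IsCodingMap G.E G.J G.T π) {ω : ℕ → V} (hω : ω ∈ TMS G.E) :
    π ω ∈ G.J (ω 0) := by
  have h : π ω ∈ (⋂ k : ℕ, vcomp G.T ω (k + 1) '' G.J (ω (k + 1))) := by rw [hπ ω hω]; rfl
  exact G.T_J (hω 0) (mem_iInter.1 h 0)

lemma coding_eq (hπ : IsCodingMap G.E G.J G.T π) {ω : ℕ → V} (hω : ω ∈ TMS G.E) :
    π ω = G.T (ω 0) (ω 1) (π (shift ω)) := by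
  have h : π (shift ω) ∈ (⋂ k : ℕ, vcomp G.T (shift ω) (k + 1) '' G.J (shift ω (k + 1))) := by
    rw [hπ _ (shift_mem_TMS hω)]; rfl
  have h2 : G.T (ω 0) (ω 1) (π (shift ω)) ∈
      (⋂ k : ℕ, vcomp G.T ω (k + 1) '' G.J (ω (k + 1))) := by
    refine mem_iInter.2 fun n => ?_
    rw [vcomp_succ_shift, image_comp]
    refine mem_image_of_mem _ ?_
    cases n with
    | zero =>
      simp only [vcomp, image_id]
      exact coding_mem_J hπ (shift_mem_TMS hω)
    | succ n => exact mem_iInter.1 h n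
  rw [hπ ω hω] at h2
  exact h2.symm

lemma coding_eq_wcomp (hπ : IsCodingMap G.E G.J G.T π) (m : ℕ) {ω : ℕ → V} (hω : ω ∈ TMS G.E) :
    π ω = wcomp G.T m ω (π (shift^[m] ω)) := by
  induction m generalizing ω with
  | zero => rfl
  | succ m ih =>
    rw [coding_eq hπ hω, ih (shift_mem_TMS hω)]; rfl

/-- Under strong separation the coding map is injective. -/
lemma coding_injOn (k : GConst G) (hπ : IsCodingMap G.E G.J G.T π)
    (hSSC : CondSSC G.E G.J G.T (π '' TMS G.E)) : InjOn π (TMS G.E) := by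
  have hstep : ∀ ω ∈ TMS G.E, ∀ ω' ∈ TMS G.E, π ω = π ω' →
      ω 0 = ω' 0 ∧ π (shift ω) = π (shift ω') := by
    intro ω hω ω' hω' h
    have hJ := coding_mem_J hπ (shift_mem_TMS hω)
    have hJ' := coding_mem_J hπ (shift_mem_TMS hω')
    by_cases he : (ω 0, ω 1) = (ω' 0, ω' 1)
    · rw [Prod.mk.injEq] at he
      refine ⟨he.1, ?_⟩
      have h1 := coding_eq hπ hω
      have h2 := coding_eq hπ hω'
      rw [h, h2, he.1, he.2] at h1
      refine (G.T_inj (hω' 0) (k.J_sub_O _ hJ') ?_ h1).symm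
      rw [zero_add, ← he.2]; exact k.J_sub_O _ hJ
    · exfalso
      have := hSSC (hω 0) (hω' 0) he
      refine (this ▸ ⟨⟨π (shift ω), ⟨hJ, mem_image_of_mem _ (shift_mem_TMS hω)⟩,
        (coding_eq hπ hω).symm⟩, ⟨π (shift ω'), ⟨hJ', mem_image_of_mem _ (shift_mem_TMS hω')⟩,
        ((coding_eq hπ hω').symm.trans h.symm)⟩⟩ : π ω ∈ (∅ : Set (Pt D)))
  intro ω hω ω' hω' h
  have hall : ∀ n, π (shift^[n] ω) = π (shift^[n] ω') := by
    intro n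
    induction n with
    | zero => exact h
    | succ n ih =>
      rw [Function.iterate_succ_apply', Function.iterate_succ_apply']
      exact (hstep _ (shift_iterate_mem_TMS hω n) _ (shift_iterate_mem_TMS hω' n) ih).2
  funext n
  have := (hstep _ (shift_iterate_mem_TMS hω n) _ (shift_iterate_mem_TMS hω' n) (hall n)).1
  simpa [shift_iterate_apply] using this

lemma wcomp_basic (k : GConst G) (m : ℕ) {ω : ℕ → V} (hω : ω ∈ TMS G.E) :
    ContDiffOn ℝ 1 (wcomp G.T m ω) (G.O (ω m)) ∧ MapsTo (wcomp G.T m ω) (G.O (ω m)) (G.O (ω 0)) ∧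
      InjOn (wcomp G.T m ω) (G.O (ω m)) ∧
      ∀ p ∈ G.O (ω m), DifferentiableAt ℝ (wcomp G.T m ω) p ∧
        ‖fderiv ℝ (wcomp G.T m ω) p‖ ≤ k.r ^ m := by
  induction m generalizing ω with
  | zero =>
    refine ⟨contDiffOn_id, mapsTo_id _, injOn_id _, fun p _ => ⟨differentiableAt_id, ?_⟩⟩
    simp only [wcomp, pow_zero, fderiv_id]
    exact ContinuousLinearMap.norm_id_le
  | succ m ih =>
    obtain ⟨h1, h2, h3, h4⟩ := ih (shift_mem_TMS hω)
    have hm : shift ω m = ω (m + 1) := rfl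
    have h0 : shift ω 0 = ω 1 := rfl
    rw [hm] at h1 h2 h3 h4
    rw [h0] at h2
    have hE : G.E (ω 0) (ω 1) := hω 0
    refine ⟨(G.T_diff hE).comp h1 h2, fun p hp => G.T_sub hE (mem_image_of_mem _ (h2 hp)),
      (G.T_inj hE).comp h3 h2, fun p hp => ?_⟩
    obtain ⟨h5, h6⟩ := h4 p hp
    have hT : DifferentiableAt ℝ (G.T (ω 0) (ω 1)) (wcomp G.T m (shift ω) p) :=
      ((G.T_diff hE).contDiffAt ((G.O_open _).mem_nhds (h2 hp))).differentiableAt one_ne_zero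
    refine ⟨hT.comp p h5, ?_⟩
    simp only [wcomp]
    rw [fderiv_comp p hT h5, pow_succ']
    refine (ContinuousLinearMap.opNorm_comp_le _ _).trans ?_
    exact mul_le_mul (k.contr hE _ (h2 hp)) h6 (norm_nonneg _) k.r_pos.le

lemma phiL_le_log (k : GConst G) (hπ : IsCodingMap G.E G.J G.T π) {ω : ℕ → V}
    (hω : ω ∈ TMS G.E) : phiL G.T π ω ≤ Real.log k.r := by
  have hx := k.J_sub_O _ (coding_mem_J hπ (shift_mem_TMS hω))
  have hE : G.E (ω 0) (ω 1) := hω 0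
  exact Real.log_le_log (k.inorm_pos hE hx)
    ((inorm_le_norm k.D_ne (G.T_unit hE _ hx)).trans (k.contr hE _ hx))

lemma birkhoff_phiL_le (k : GConst G) (hπ : IsCodingMap G.E G.J G.T π) (m : ℕ) {ω : ℕ → V}
    (hω : ω ∈ TMS G.E) : birkhoff (phiL G.T π) m ω ≤ m * Real.log k.r := by
  rw [birkhoff]
  refine (Finset.sum_le_card_nsmul _ _ (Real.log k.r)
    fun i _ => phiL_le_log k hπ (shift_iterate_mem_TMS hω i)).trans_eq ?_
  simp

/-- Infinitesimal expansion of a composition near the coded point: by the distortion condition for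
`‖·‖_i` the rate is `exp (S_m φ̲)` up to a factor depending on `ρ` only. -/
lemma wcomp_expand_aux (k : GConst G) (hπ : IsCodingMap G.E G.J G.T π) (m : ℕ) {ω : ℕ → V}
    (hω : ω ∈ TMS G.E) {p : Pt D} (hp : p ∈ ball (π (shift^[m] ω)) k.ρ) (v : Pt D) :
    Real.exp (birkhoff (phiL G.T π) m ω - ∑ i ∈ Finset.range m, k.c * (k.r ^ i * k.ρ) ^ k.β) * ‖v‖
      ≤ ‖fderiv ℝ (wcomp G.T m ω) p v‖ := by
  induction m generalizing ω with
  | zero => simp [birkhoff, wcomp]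
  | succ m ih =>
    have hE : G.E (ω 0) (ω 1) := hω 0
    have hω1 := shift_mem_TMS hω
    obtain ⟨-, h2, -, h4⟩ := wcomp_basic k m hω1
    rw [Function.iterate_succ_apply] at hp
    set q := π (shift^[m] (shift ω)) with hq
    have hqJ : q ∈ G.J (shift ω m) := by
      simpa [shift_iterate_apply] using coding_mem_J hπ (shift_iterate_mem_TMS hω1 m)
    have hpO := k.ball_sub _ q hqJ hp
    obtain ⟨h5, -⟩ := h4 p hpO
    have h2p : wcomp G.T m (shift ω) p ∈ G.O (ω 1) := h2 hpO
    have h2q : π (shift ω) ∈ G.O (ω 1) := k.J_sub_O _ (coding_mem_J hπ hω1)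
    have hT : DifferentiableAt ℝ (G.T (ω 0) (ω 1)) (wcomp G.T m (shift ω) p) :=
      ((G.T_diff hE).contDiffAt ((G.O_open _).mem_nhds h2p)).differentiableAt one_ne_zero
    have hdist : dist (wcomp G.T m (shift ω) p) (π (shift ω)) ≤ k.r ^ m * k.ρ := by
      rw [coding_eq_wcomp hπ m hω1, ← hq, dist_eq_norm]
      refine ((convex_ball q k.ρ).norm_image_sub_le_of_norm_fderiv_le
        (fun z hz => (h4 z (k.ball_sub _ q hqJ hz)).1) (fun z hz => (h4 z (k.ball_sub _ q hqJ hz)).2)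
        (mem_ball_self k.ρ_pos) hp).trans ?_
      refine mul_le_mul_of_nonneg_left ?_ (pow_nonneg k.r_pos.le _)
      rw [← dist_eq_norm]; exact (mem_ball.1 hp).le
    have hlog := k.log_inorm_sub_le hE h2p h2q
    have hlog2 : k.c * dist (wcomp G.T m (shift ω) p) (π (shift ω)) ^ k.β ≤
        k.c * (k.r ^ m * k.ρ) ^ k.β :=
      mul_le_mul_of_nonneg_left (Real.rpow_le_rpow dist_nonneg hdist k.β_pos.le) k.c_pos.le
    have hphi : phiL G.T π ω = Real.log (inorm (fderiv ℝ (G.T (ω 0) (ω 1)) (π (shift ω)))) := rfl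
    have hin : Real.exp (phiL G.T π ω - k.c * (k.r ^ m * k.ρ) ^ k.β) ≤
        inorm (fderiv ℝ (G.T (ω 0) (ω 1)) (wcomp G.T m (shift ω) p)) := by
      rw [← Real.le_log_iff_exp_le (k.inorm_pos hE h2p), hphi]
      linarith
    have hI := ih hω1 hp
    simp only [wcomp]
    rw [fderiv_comp p hT h5, birkhoff_succ, Finset.sum_range_succ, ContinuousLinearMap.comp_apply]
    refine le_trans ?_ (inorm_mul_norm_le (G.T_unit hE _ h2p) _)
    refine le_trans (le_of_eq ?_) (mul_le_mul hin hI (by positivity) (k.inorm_pos hE h2p).le)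
    rw [← mul_assoc, ← Real.exp_add]
    congr 2; ring

/-- The non-infinitesimal version of `wcomp_expand_aux`, which turns separation at a later time into
separation of the coded points. -/
lemma wcomp_expand (k : GConst G) (hπ : IsCodingMap G.E G.J G.T π) (m : ℕ) {ω : ℕ → V}
    (hω : ω ∈ TMS G.E) {y : Pt D} (hy : y ∈ G.O (ω m)) :
    Real.exp (birkhoff (phiL G.T π) m ω - k.distortion k.ρ) / 2 *
      min (dist (π (shift^[m] ω)) y) k.ρ ≤ dist (π ω) (wcomp G.T m ω y) := by
  obtain ⟨h1, h2, h3, h4⟩ := wcomp_basic k m hω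
  have hqJ : π (shift^[m] ω) ∈ G.J (ω m) := by
    simpa [shift_iterate_apply] using coding_mem_J hπ (shift_iterate_mem_TMS hω m)
  rw [coding_eq_wcomp hπ m hω]
  refine half_mul_min_le_dist (G.O_open _) h1 h3 (k.ball_sub _ _ hqJ) (Real.exp_pos _) ?_ hy
  intro p hp v
  refine le_trans ?_ (wcomp_expand_aux k hπ m hω hp v)
  refine mul_le_mul_of_nonneg_right (Real.exp_le_exp.2 ?_) (norm_nonneg _)
  have := k.sum_distortion_le k.ρ_pos.le m
  linarith

/-- `M` bounds the intrinsic diameter of `J v` inside `O v`. This is expressed through the only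
consequence that matters: a map with derivative at most `κ` on `O v` has oscillation at most
`κ * M` on `J v`. -/
def IntrinsicBound (G : SGIFS D V) (v : V) (M : ℝ) : Prop :=
  0 < M ∧ ∀ (g : Pt D → Pt D) (κ : ℝ), 0 ≤ κ →
      (∀ p ∈ G.O v, DifferentiableAt ℝ g p ∧ ‖fderiv ℝ g p‖ ≤ κ) →
      ∀ x ∈ G.J v, ∀ y ∈ G.J v, dist (g x) (g y) ≤ κ * M

lemma exists_intrinsicBound (k : GConst G) (v : V) : ∃ M, IntrinsicBound G v M :=
  exists_osc_bound (G.J_cpt v) (G.J_conn v) (G.O_open v) (k.J_sub_O v)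

lemma dist_coding_le (k : GConst G) (hπ : IsCodingMap G.E G.J G.T π) (m : ℕ) {ω ω' : ℕ → V}
    (hω : ω ∈ TMS G.E) (hω' : ω' ∈ TMS G.E) (h : ∀ i ≤ m, ω i = ω' i) {M : ℝ}
    (hM : IntrinsicBound G (ω m) M) : dist (π ω) (π ω') ≤ k.r ^ m * M := by
  rw [coding_eq_wcomp hπ m hω, coding_eq_wcomp hπ m hω', ← wcomp_congr G.T h]
  refine hM.2 _ _ (pow_nonneg k.r_pos.le _) (wcomp_basic k m hω).2.2.2 _ ?_ _ ?_
  · simpa [shift_iterate_apply] using coding_mem_J hπ (shift_iterate_mem_TMS hω m)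
  · rw [h m le_rfl]
    simpa [shift_iterate_apply] using coding_mem_J hπ (shift_iterate_mem_TMS hω' m)

/-- Bounded distortion of Birkhoff sums on a cylinder of `m` edges. -/
lemma birkhoff_sub_le (k : GConst G) (hπ : IsCodingMap G.E G.J G.T π) (m : ℕ) {ω ω' : ℕ → V}
    (hω : ω ∈ TMS G.E) (hω' : ω' ∈ TMS G.E) (h : ∀ i ≤ m, ω i = ω' i) {M : ℝ}
    (hM : IntrinsicBound G (ω m) M) :
    birkhoff (phiL G.T π) m ω - birkhoff (phiL G.T π) m ω' ≤ k.distortion M := by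
  refine le_trans ?_ (k.sum_distortion_le hM.1.le m)
  induction m generalizing ω ω' with
  | zero => simp [birkhoff]
  | succ m ih =>
    have hω1 := shift_mem_TMS hω
    have hω1' := shift_mem_TMS hω'
    have h' : ∀ i ≤ m, shift ω i = shift ω' i := fun i hi => h (i + 1) (by omega)
    have hI := ih hω1 hω1' h' hM
    have hE : G.E (ω 0) (ω 1) := hω 0
    have hx : π (shift ω) ∈ G.O (ω 1) := k.J_sub_O _ (coding_mem_J hπ hω1)
    have hx' : π (shift ω') ∈ G.O (ω 1) := by
      rw [h 1 (by omega)]; exact k.J_sub_O _ (coding_mem_J hπ hω1')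
    have hlog := k.log_inorm_sub_le hE hx' hx
    have hd := dist_coding_le k hπ m hω1' hω1 (fun i hi => (h' i hi).symm)
      (M := M) (by rw [← h' m le_rfl]; exact hM)
    have hlog2 : k.c * dist (π (shift ω')) (π (shift ω)) ^ k.β ≤ k.c * (k.r ^ m * M) ^ k.β :=
      mul_le_mul_of_nonneg_left (Real.rpow_le_rpow dist_nonneg hd k.β_pos.le) k.c_pos.le
    have hphi : phiL G.T π ω = Real.log (inorm (fderiv ℝ (G.T (ω 0) (ω 1)) (π (shift ω)))) := rfl
    have hphi' : phiL G.T π ω' =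
        Real.log (inorm (fderiv ℝ (G.T (ω 0) (ω 1)) (π (shift ω')))) := by
      rw [h 0 (by omega), h 1 (by omega)]; rfl
    rw [birkhoff_succ, birkhoff_succ, Finset.sum_range_succ]
    linarith

end Coding

/-! ### Lower dimension bounds from loops -/

section Moran

open MeasureTheory

/-- A Moran-type lower bound: if a continuous image of the full shift on a finite alphabet is
separated at level `n` by `c₀ * ∏ i < n, lam (x i)`, and `∑ lam i ^ t ≥ 1`, then its Hausdorff
dimension is at least `t`. The Bernoulli measure with weights proportional to `lam i ^ t` satisfies
the hypothesis of the mass distribution principle. -/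
lemma le_dimH_range_of_separated {X : Type*} [MetricSpace X] [MeasurableSpace X] [BorelSpace X]
    {ι : Type*} [Fintype ι] [TopologicalSpace ι] [DiscreteTopology ι] [MeasurableSpace ι]
    [BorelSpace ι] {F : (ℕ → ι) → X} (hF : Continuous F) {lam : ι → ℝ} (hlam : ∀ i, 0 < lam i)
    {q : ℝ} (hq1 : q < 1) (hlamq : ∀ i, lam i ≤ q) {t : ℝ} (ht : 0 < t)
    (hsum : 1 ≤ ∑ i, lam i ^ t) {c₀ : ℝ} (hc₀ : 0 < c₀)
    (hsep : ∀ x y n, (∀ i < n, x i = y i) → x n ≠ y n →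
      c₀ * ∏ i ∈ Finset.range n, lam (x i) ≤ dist (F x) (F y)) :
    ENNReal.ofReal t ≤ dimH (range F) := by
  set S := ∑ i, lam i ^ t with hS
  have hS0 : 0 < S := zero_lt_one.trans_le hsum
  let p : ι → ℝ≥0∞ := fun i => ENNReal.ofReal (lam i ^ t / S)
  have hp1 : ∑ i, p i = 1 := by
    simp only [p]
    rw [← ENNReal.ofReal_sum_of_nonneg, ← Finset.sum_div, ← hS, div_self hS0.ne', ENNReal.ofReal_one]
    intro i _
    have := Real.rpow_nonneg (hlam i).le t
    positivity
  have hple : ∀ i, p i ≤ ENNReal.ofReal (lam i ^ t) := fun i =>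
    ENNReal.ofReal_le_ofReal (div_le_self (Real.rpow_nonneg (hlam i).le t) hsum)
  let P : PMF ι := PMF.ofFintype p hp1
  let μ : Measure (ℕ → ι) := Measure.infinitePi (fun _ : ℕ => P.toMeasure)
  have hcyl : ∀ (x : ℕ → ι) (n : ℕ), μ {y | ∀ i < n, y i = x i} ≤
      ENNReal.ofReal ((∏ i ∈ Finset.range n, lam (x i)) ^ t) := by
    intro x n
    have h1 : {y : ℕ → ι | ∀ i < n, y i = x i} = Set.pi (Finset.range n) (fun i => {x i}) := by
      ext y; simp [Set.mem_pi]
    rw [h1]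
    simp only [μ]
    rw [Measure.infinitePi_pi _ (fun i _ => measurableSet_singleton _)]
    rw [← Real.finsetProd_rpow _ _ (fun i _ => (hlam _).le), ENNReal.ofReal_prod_of_nonneg
      (fun i _ => Real.rpow_nonneg (hlam _).le _)]
    refine Finset.prod_le_prod' fun i _ => ?_
    rw [PMF.toMeasure_apply_singleton _ _ (measurableSet_singleton _)]
    exact hple _
  have hmain : ∀ s : Set X, (μ.map F) s ≤ ENNReal.ofReal (c₀⁻¹ ^ t) * ediam s ^ t := by
    intro s
    refine (measure_mono (subset_closure (s := s))).trans ?_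
    rw [Measure.map_apply hF.measurable isClosed_closure.measurableSet, ← ediam_closure s]
    set s' := F ⁻¹' closure s with hs'
    rcases s'.subsingleton_or_nontrivial with hsub | hnt
    · have h0 : μ s' = 0 := by
        rcases s'.eq_empty_or_nonempty with he | ⟨x, hx⟩
        · rw [he, measure_empty]
        · have hq0 : 0 < q := (hlam (x 0)).trans_le (hlamq _)
          have hb : ∀ n : ℕ, μ s' ≤ ENNReal.ofReal ((q ^ t) ^ n) := by
            intro n
            refine (measure_mono ?_).trans ((hcyl x n).trans (ENNReal.ofReal_le_ofReal ?_))
            · intro y hy i _; rw [hsub hy hx]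
            · rw [← Real.rpow_natCast, ← Real.rpow_mul hq0.le, mul_comm, Real.rpow_mul hq0.le,
                Real.rpow_natCast]
              refine Real.rpow_le_rpow (Finset.prod_nonneg fun i _ => (hlam _).le) ?_ ht.le
              refine (Finset.prod_le_prod (fun i _ => (hlam _).le) (fun i _ => hlamq _)).trans ?_
              simp
          have hlim : Tendsto (fun n : ℕ => ENNReal.ofReal ((q ^ t) ^ n)) atTop (𝓝 0) := by
            rw [← ENNReal.ofReal_zero]
            exact ENNReal.tendsto_ofReal (tendsto_pow_atTop_nhds_zero_of_lt_one
              (Real.rpow_nonneg hq0.le _) (Real.rpow_lt_one hq0.le hq1 ht))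
          exact le_antisymm (ge_of_tendsto' hlim hb) (zero_le)
      rw [h0]; exact zero_le
    · classical
      have hex : ∃ n, ∃ x ∈ s', ∃ y ∈ s', (∀ i < n, x i = y i) ∧ x n ≠ y n := by
        obtain ⟨x, hx, y, hy, hxy⟩ := hnt
        exact ⟨PiNat.firstDiff x y, x, hx, y, hy, fun i hi => PiNat.apply_eq_of_lt_firstDiff hi,
          PiNat.apply_firstDiff_ne hxy⟩
      obtain ⟨x, hx, y, hy, hxy, hne⟩ := Nat.find_spec hex
      set n := Nat.find hex with hn
      have hsubc : s' ⊆ {z | ∀ i < n, z i = x i} := by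
        intro z hz i hi
        by_contra hzi
        have hzx : z ≠ x := fun h => hzi (by rw [h])
        have h1 : PiNat.firstDiff z x < n := by
          by_contra! h
          exact hzi (PiNat.apply_eq_of_lt_firstDiff (hi.trans_le h))
        exact Nat.find_min hex h1 ⟨z, hz, x, hx, fun i hi => PiNat.apply_eq_of_lt_firstDiff hi,
          PiNat.apply_firstDiff_ne hzx⟩
      refine (measure_mono hsubc).trans ((hcyl x n).trans ?_)
      have hd : edist (F x) (F y) ≤ ediam (closure s) := edist_le_ediam_of_mem hx hy
      refine le_trans ?_ (mul_le_mul_right (ENNReal.rpow_le_rpow hd ht.le) _)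
      rw [edist_dist, ENNReal.ofReal_rpow_of_nonneg dist_nonneg ht.le,
        ← ENNReal.ofReal_mul (by positivity), ← Real.mul_rpow (by positivity) dist_nonneg]
      refine ENNReal.ofReal_le_ofReal (Real.rpow_le_rpow
        (Finset.prod_nonneg fun i _ => (hlam _).le) ?_ ht.le)
      rw [le_inv_mul_iff₀ hc₀]
      exact hsep x y n hxy hne
  have hC0 : ENNReal.ofReal (c₀⁻¹ ^ t) ≠ 0 := by
    rw [Ne, ENNReal.ofReal_eq_zero, not_le]; positivity
  have hle : (ENNReal.ofReal (c₀⁻¹ ^ t))⁻¹ • μ.map F ≤ μH[t] := by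
    refine Measure.le_hausdorffMeasure t _ 1 zero_lt_one fun s _ => ?_
    rw [Measure.smul_apply, smul_eq_mul, ENNReal.inv_mul_le_iff hC0 ENNReal.ofReal_ne_top]
    exact hmain s
  have hpos : μH[t] (range F) ≠ 0 := by
    have h1 := hle (range F)
    have h2 : (μ.map F) (range F) = 1 := by
      refine le_antisymm ?_ ?_
      · have : IsProbabilityMeasure (μ.map F) :=
          Measure.isProbabilityMeasure_map hF.measurable.aemeasurable
        exact prob_le_one
      · have := Measure.le_map_apply (μ := μ) hF.measurable.aemeasurable (range F)
        rw [preimage_range, measure_univ] at this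
        exact this
    rw [Measure.smul_apply, h2, smul_eq_mul, mul_one] at h1
    intro h0
    rw [h0, nonpos_iff_eq_zero, ENNReal.inv_eq_zero] at h1
    exact ENNReal.ofReal_ne_top h1
  have := le_dimH_of_hausdorffMeasure_ne_zero (d := t.toNNReal) (s := range F)
    (by rwa [Real.coe_toNNReal t ht.le])
  exact this

variable {D : ℕ} {V : Type*} {ι : Type*}

/-- The infinite concatenation of the blocks `ℓ (x 0), ℓ (x 1), …`, each cut to its first `m`
letters. -/
def cat (ℓ : ι → ℕ → V) (m : ℕ) (x : ℕ → ι) : ℕ → V := fun n => ℓ (x (n / m)) (n % m)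

lemma cat_mem_TMS {A : V → V → Prop} {ℓ : ι → ℕ → V} {m : ℕ} (hm : 0 < m) {f : V}
    (h0 : ∀ i, ℓ i 0 = f) (hl : ∀ i, ℓ i m = f) (hE : ∀ i, ∀ j < m, A (ℓ i j) (ℓ i (j + 1)))
    (x : ℕ → ι) : cat ℓ m x ∈ TMS A := by
  intro n
  have hj : n % m < m := Nat.mod_lt _ hm
  have hA := hE (x (n / m)) _ hj
  simp only [cat]
  by_cases h : n % m + 1 = m
  · have h1 : (n + 1) % m = 0 := by
      have hn : n + 1 = m * (n / m + 1) := by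
        have := Nat.div_add_mod n m
        rw [Nat.mul_succ]; omega
      rw [hn, Nat.mul_mod_right]
    rw [h1, h0]
    rwa [h, hl] at hA
  · have h1 : n % m + 1 < m := by omega
    have hn : n + 1 = m * (n / m) + (n % m + 1) := by have := Nat.div_add_mod n m; omega
    have h2 : (n + 1) % m = n % m + 1 := by
      rw [hn, Nat.mul_add_mod, Nat.mod_eq_of_lt h1]
    have h3 : (n + 1) / m = n / m := by
      rw [hn, Nat.mul_add_div hm, Nat.div_eq_of_lt h1, add_zero]
    rw [h2, h3]; exact hA

lemma shift_iterate_cat (ℓ : ι → ℕ → V) {m : ℕ} (hm : 0 < m) (n : ℕ) (x : ℕ → ι) :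
    shift^[n * m] (cat ℓ m x) = cat ℓ m (shift^[n] x) := by
  funext j
  rw [shift_iterate_apply]
  simp only [cat]
  rw [Nat.add_mul_div_right _ _ hm, Nat.add_mul_mod_self_right, shift_iterate_apply]

lemma cat_apply_of_le {ℓ : ι → ℕ → V} {m : ℕ} (hm : 0 < m) {f : V}
    (h0 : ∀ i, ℓ i 0 = f) (hl : ∀ i, ℓ i m = f) (x : ℕ → ι) {j : ℕ} (hj : j ≤ m) :
    cat ℓ m x j = ℓ (x 0) j := by
  simp only [cat]
  rcases hj.eq_or_lt with rfl | h
  · rw [Nat.mod_self, h0, hl]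
  · rw [Nat.mod_eq_of_lt h, Nat.div_eq_of_lt h]

lemma cat_mul {ℓ : ι → ℕ → V} {m : ℕ} {f : V} (h0 : ∀ i, ℓ i 0 = f) (x : ℕ → ι) (n : ℕ) :
    cat ℓ m x (n * m) = f := by
  simp [cat, h0]

lemma cat_congr {ℓ : ι → ℕ → V} {m : ℕ} {f : V} (h0 : ∀ i, ℓ i 0 = f) {x y : ℕ → ι}
    {n : ℕ} (h : ∀ i < n, x i = y i) : ∀ j ≤ n * m, cat ℓ m x j = cat ℓ m y j := by
  intro j hj
  rcases hj.eq_or_lt with rfl | hj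
  · rw [cat_mul h0, cat_mul h0]
  · simp only [cat]; rw [h _ (Nat.div_lt_of_lt_mul (by rwa [mul_comm] at hj))]

/-- A finite family of loops of common length `m` at a vertex `f`, with contraction rates
bounded below by `lam i`, forces `dim_H K ≥ t` as soon as `∑ lam i ^ t ≥ 1`. -/
lemma le_dimH_of_loops {G : SGIFS D V} {π : (ℕ → V) → Pt D} (k : GConst G)
    (hπ : IsCodingMap G.E G.J G.T π) (hSSC : CondSSC G.E G.J G.T (π '' TMS G.E))
    [Fintype ι] {ℓ : ι → ℕ → V} {m : ℕ} (hm : 0 < m) {f : V}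
    (h0 : ∀ i, ℓ i 0 = f) (hl : ∀ i, ℓ i m = f) (hE : ∀ i, ∀ j < m, G.E (ℓ i j) (ℓ i (j + 1)))
    (hinj : ∀ i i', (∀ j < m, ℓ i j = ℓ i' j) → i = i') {lam : ι → ℝ} (hpos : ∀ i, 0 < lam i)
    (hlam : ∀ i, ∀ ω ∈ TMS G.E, (∀ j ≤ m, ω j = ℓ i j) →
      lam i ≤ Real.exp (birkhoff (phiL G.T π) m ω)) {t : ℝ} (ht : 0 < t)
    (hsum : 1 ≤ ∑ i, lam i ^ t) :
    ENNReal.ofReal t ≤ dimH (π '' TMS G.E) := by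
  let _ : TopologicalSpace ι := ⊥
  have : DiscreteTopology ι := ⟨rfl⟩
  let _ : MeasurableSpace ι := ⊤
  have : BorelSpace ι := ⟨borel_eq_top_of_discrete.symm⟩
  set F : (ℕ → ι) → Pt D := fun x => π (cat ℓ m x) with hFdef
  have hmem : ∀ x, cat ℓ m x ∈ TMS G.E := cat_mem_TMS hm h0 hl hE
  obtain ⟨M, hM⟩ := exists_intrinsicBound k f
  have hF : Continuous F := by
    rw [continuous_iff_continuousAt]
    intro x
    rw [ContinuousAt, Metric.tendsto_nhds]
    intro ε hε
    obtain ⟨n, hn⟩ := exists_pow_lt_of_lt_one (div_pos hε hM.1) k.r_lt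
    rw [lt_div_iff₀ hM.1] at hn
    have hcyl : ∀ᶠ y in 𝓝 x, ∀ i < n, y i = x i := by
      have : ∀ᶠ y in 𝓝 x, ∀ i ∈ Finset.range n, y i = x i := by
        rw [Filter.eventually_all_finset]
        intro i _
        exact ((isOpen_discrete {x i}).preimage (continuous_apply (A := fun _ : ℕ => ι) i)).mem_nhds rfl
      simpa using this
    filter_upwards [hcyl] with y hy
    refine lt_of_le_of_lt ?_ hn
    refine (dist_coding_le k hπ (n * m) (hmem y) (hmem x) (cat_congr h0 hy)
      (by rw [cat_mul h0]; exact hM)).trans ?_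
    refine mul_le_mul_of_nonneg_right ?_ hM.1.le
    exact pow_le_pow_of_le_one k.r_pos.le k.r_lt.le (Nat.le_mul_of_pos_right n hm)
  -- points whose first blocks differ are uniformly separated, by compactness
  obtain ⟨δ, hδ, hδsep⟩ : ∃ δ > 0, ∀ x y : ℕ → ι, x 0 ≠ y 0 → δ ≤ dist (F x) (F y) := by
    let Q : Set ((ℕ → ι) × (ℕ → ι)) := {z | z.1 0 ≠ z.2 0}
    have hQ : IsCompact Q := by
      refine IsClosed.isCompact ?_
      have : Q = (fun z : (ℕ → ι) × (ℕ → ι) => (z.1 0, z.2 0)) ⁻¹' {z | z.1 ≠ z.2} := rfl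
      rw [this]
      exact (isClosed_discrete _).preimage (by fun_prop)
    have hdc : Continuous (fun z : (ℕ → ι) × (ℕ → ι) => dist (F z.1) (F z.2)) := by fun_prop
    rcases Q.eq_empty_or_nonempty with he | hne
    · refine ⟨1, one_pos, fun x y hxy => ?_⟩
      exact absurd (show (x, y) ∈ Q from hxy) (by rw [he]; exact fun h => h)
    · obtain ⟨z, hz, hmin⟩ := hQ.exists_isMinOn hne hdc.continuousOn
      refine ⟨dist (F z.1) (F z.2), ?_, fun x y hxy => isMinOn_iff.1 hmin (x, y) hxy⟩
      rw [gt_iff_lt, dist_pos]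
      intro h
      have hcat := coding_injOn k hπ hSSC (hmem z.1) (hmem z.2) h
      apply hz
      apply hinj
      intro j hj
      rw [← cat_apply_of_le hm h0 hl _ hj.le, ← cat_apply_of_le hm h0 hl _ hj.le, hcat]
  have hprod : ∀ n x, ∏ i ∈ Finset.range n, lam (x i) ≤
      Real.exp (birkhoff (phiL G.T π) (n * m) (cat ℓ m x)) := by
    intro n
    induction n with
    | zero => intro x; simp [birkhoff]
    | succ n ih =>
      intro x
      rw [Finset.prod_range_succ, Nat.succ_mul, birkhoff_add, Real.exp_add,
        shift_iterate_cat ℓ hm]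
      refine mul_le_mul (ih x) (hlam _ _ (hmem _) fun j hj => ?_) (hpos _).le (Real.exp_pos _).le
      rw [cat_apply_of_le hm h0 hl _ hj, shift_iterate_apply, zero_add]
  have hlamr : ∀ i, lam i ≤ k.r := by
    intro i
    refine (hlam i _ (hmem fun _ => i) fun j hj => cat_apply_of_le hm h0 hl _ hj).trans ?_
    rw [← Real.le_log_iff_exp_le k.r_pos]
    refine (birkhoff_phiL_le k hπ m (hmem _)).trans ?_
    have h1 : Real.log k.r < 0 := Real.log_neg k.r_pos k.r_lt
    have h2 : (1 : ℝ) ≤ m := by exact_mod_cast hm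
    nlinarith
  have hsep : ∀ x y n, (∀ i < n, x i = y i) → x n ≠ y n →
      (Real.exp (-k.distortion k.ρ) / 2 * min δ k.ρ) * ∏ i ∈ Finset.range n, lam (x i) ≤
        dist (F x) (F y) := by
    intro x y n hxy hne
    have hyJ : π (shift^[n * m] (cat ℓ m y)) ∈ G.O (cat ℓ m x (n * m)) := by
      refine k.J_sub_O _ ?_
      have := coding_mem_J hπ (shift_iterate_mem_TMS (hmem y) (n * m))
      rwa [shift_iterate_apply, zero_add, cat_mul h0, ← cat_mul (m := m) h0 x n] at this
    have h1 := wcomp_expand k hπ (n * m) (hmem x) hyJ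
    rw [wcomp_congr G.T (cat_congr h0 hxy), ← coding_eq_wcomp hπ _ (hmem y),
      shift_iterate_cat ℓ hm, shift_iterate_cat ℓ hm] at h1
    refine le_trans ?_ h1
    have h2 := hδsep (shift^[n] x) (shift^[n] y) (by simpa [shift_iterate_apply] using hne)
    have h3 : min δ k.ρ ≤ min (dist (F (shift^[n] x)) (F (shift^[n] y))) k.ρ :=
      min_le_min_right _ h2
    have h4 := hprod n x
    have h5 : 0 < min δ k.ρ := lt_min hδ k.ρ_pos
    rw [sub_eq_add_neg, Real.exp_add]
    calc _ = (∏ i ∈ Finset.range n, lam (x i)) *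
          (Real.exp (-k.distortion k.ρ) / 2 * min δ k.ρ) := by ring
      _ ≤ Real.exp (birkhoff (phiL G.T π) (n * m) (cat ℓ m x)) *
          (Real.exp (-k.distortion k.ρ) / 2 * min (dist (F (shift^[n] x)) (F (shift^[n] y))) k.ρ) := by
          gcongr
      _ = _ := by ring
  have hc : 0 < Real.exp (-k.distortion k.ρ) / 2 * min δ k.ρ :=
    mul_pos (by positivity) (lt_min hδ k.ρ_pos)
  refine (le_dimH_range_of_separated hF hpos k.r_lt hlamr ht hsum hc hsep).trans (dimH_mono ?_)
  rintro _ ⟨x, rfl⟩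
  exact mem_image_of_mem _ (hmem x)

end Moran

/-! ### Word and loop generating functions -/

section Words

variable {V : Type*}

/-- The cylinder of a finite word, with words encoded as lists. -/
def cylL (A : V → V → Prop) (l : List V) : Set (ℕ → V) :=
  {ω | ω ∈ TMS A ∧ ∀ (i : ℕ) (h : i < l.length), ω i = l[i]}

/-- The weight `sup_{ω ∈ [l]} exp (S_{|l|} f ω)` of a word. -/
noncomputable def wordWeight (A : V → V → Prop) (f : (ℕ → V) → ℝ) (l : List V) : ℝ≥0∞ :=
  ⨆ ω ∈ cylL A l, ENNReal.ofReal (Real.exp (birkhoff f l.length ω))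

lemma cylL_append {A : V → V → Prop} {u v : List V} {ω : ℕ → V} (h : ω ∈ cylL A (u ++ v)) :
    ω ∈ cylL A u ∧ shift^[u.length] ω ∈ cylL A v := by
  refine ⟨⟨h.1, fun i hi => ?_⟩, ⟨shift_iterate_mem_TMS h.1 _, fun i hi => ?_⟩⟩
  · rw [h.2 i (by simp; omega), List.getElem_append_left hi]
  · rw [shift_iterate_apply, h.2 (i + u.length) (by simp; omega),
      List.getElem_append_right (by omega)]
    simp

lemma wordWeight_append (A : V → V → Prop) (f : (ℕ → V) → ℝ) (u v : List V) :
    wordWeight A f (u ++ v) ≤ wordWeight A f u * wordWeight A f v := by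
  refine iSup₂_le fun ω hω => ?_
  obtain ⟨h1, h2⟩ := cylL_append hω
  rw [List.length_append, birkhoff_add, Real.exp_add, ENNReal.ofReal_mul (Real.exp_pos _).le]
  exact mul_le_mul' (le_iSup₂_of_le ω h1 le_rfl) (le_iSup₂_of_le _ h2 le_rfl)

lemma wordWeight_singleton_le {A : V → V → Prop} {f : (ℕ → V) → ℝ} {a : V → ℝ≥0∞}
    (ha : ∀ ω ∈ TMS A, ENNReal.ofReal (Real.exp (f ω)) ≤ a (ω 0)) (v : V) :
    wordWeight A f [v] ≤ a v := by
  refine iSup₂_le fun ω hω => ?_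
  have h0 : ω 0 = v := hω.2 0 (by simp)
  rw [← h0]
  refine le_trans (le_of_eq ?_) (ha ω hω.1)
  simp [birkhoff]

lemma wordWeight_le_prod {A : V → V → Prop} {f : (ℕ → V) → ℝ} {a : V → ℝ≥0∞}
    (ha : ∀ ω ∈ TMS A, ENNReal.ofReal (Real.exp (f ω)) ≤ a (ω 0)) (l : List V) :
    wordWeight A f l ≤ (l.map a).prod := by
  induction l with
  | nil => exact iSup₂_le fun ω _ => by simp [birkhoff]
  | cons v l ih =>
    rw [List.map_cons, List.prod_cons]
    exact (wordWeight_append A f [v] l).trans (mul_le_mul' (wordWeight_singleton_le ha v) ih)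

/-- The words of length `n` contribute `(∑ b v) ^ n ≤ 2⁻ⁿ`. The bound is shown for words of length
at most `n`, by induction on `n`. -/
lemma tsum_list_prod_le {b : V → ℝ≥0∞} (hb : ∑' v, b v ≤ 1 / 2) :
    ∑' w : List V, (w.map b).prod ≤ 2 := by
  classical
  have htr : ∀ n : ℕ, ∑' w : List V, (if w.length ≤ n then (w.map b).prod else 0) ≤ 2 := by
    intro n
    have hsplit : ∀ F : List V → ℝ≥0∞, ∑' w, F w = F [] + ∑' v, ∑' w, F (v :: w) := by
      intro F
      let e : Unit ⊕ (V × List V) ≃ List V :=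
        { toFun := fun o => o.elim (fun _ => []) fun p => p.1 :: p.2
          invFun := fun l => match l with
            | [] => Sum.inl ()
            | v :: w => Sum.inr (v, w)
          left_inv := by rintro (_ | ⟨v, w⟩) <;> rfl
          right_inv := by rintro (_ | ⟨v, w⟩) <;> rfl }
      rw [← e.tsum_eq, Summable.tsum_sum ENNReal.summable ENNReal.summable, ENNReal.tsum_prod']
      simp [e]
    induction n with
    | zero =>
      rw [hsplit]
      simp
    | succ n ih =>
      rw [hsplit]
      have h1 : ∀ v, ∑' w : List V, (if (v :: w).length ≤ n + 1 then ((v :: w).map b).prod else 0) ≤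
          b v * 2 := by
        intro v
        refine le_trans (le_of_eq ?_) (mul_le_mul_right ih (b v))
        rw [← ENNReal.tsum_mul_left]
        refine tsum_congr fun w => ?_
        simp
      have h2 : (if ([] : List V).length ≤ n + 1 then (([] : List V).map b).prod else 0) = 1 := by
        simp
      rw [h2]
      calc _ ≤ 1 + ∑' v, b v * 2 := by gcongr with v; exact h1 v
        _ = 1 + (∑' v, b v) * 2 := by rw [ENNReal.tsum_mul_right]
        _ ≤ 1 + 1 / 2 * 2 := by gcongr
        _ = 2 := by
          rw [one_div, ENNReal.inv_mul_cancel two_ne_zero ENNReal.ofNat_ne_top, one_add_one_eq_two]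
  rw [ENNReal.tsum_eq_iSup_sum]
  refine iSup_le fun s => ?_
  refine le_trans ?_ (htr (s.sup List.length))
  refine le_trans (Finset.sum_le_sum fun w hw => ?_) (ENNReal.sum_le_tsum s)
  rw [if_pos (Finset.le_sup hw)]

open Classical in
/-- The generating function at `z` of the words with all letters in `H`. -/
noncomputable def wordSum (A : V → V → Prop) (f : (ℕ → V) → ℝ) (z : ℝ≥0∞) (H : Set V) : ℝ≥0∞ :=
  ∑' w : List V, if ∀ v ∈ w, v ∈ H then z ^ w.length * wordWeight A f w else 0

open Classical in
/-- The generating function at `z` of the words that start and end with the letter `v`. -/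
noncomputable def loopSum (A : V → V → Prop) (f : (ℕ → V) → ℝ) (z : ℝ≥0∞) (v : V) : ℝ≥0∞ :=
  ∑' l : List V, if l.head? = some v ∧ l.getLast? = some v then
    z ^ l.length * wordWeight A f l else 0

/-- Decomposition of a word at the first and the last occurrence of a letter. -/
lemma exists_loop_decomp {w : List V} {v : V} (hv : v ∈ w) :
    ∃ u l u', w = u ++ (l ++ u') ∧ v ∉ u ∧ v ∉ u' ∧ l.head? = some v ∧ l.getLast? = some v := by
  obtain ⟨u, t, rfl, hu⟩ := List.eq_append_cons_of_mem hv
  obtain ⟨p, q, hpq, hp⟩ := List.eq_append_cons_of_mem (a := v) (xs := (v :: t).reverse) (by simp)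
  have h : v :: t = q.reverse ++ [v] ++ p.reverse := by
    rw [← List.reverse_reverse (v :: t), hpq]; simp
  refine ⟨u, q.reverse ++ [v], p.reverse, by rw [h], hu, by simpa using hp, ?_, by simp⟩
  cases hq : q.reverse with
  | nil => simp
  | cons x xs => rw [hq] at h; simp at h; simp [h.1]

/-- A word over `insert v H` either avoids `v` or is a product of a word over `H`, a word from `v`
to `v` and another word over `H`. -/
lemma wordSum_insert_le (A : V → V → Prop) (f : (ℕ → V) → ℝ) (z : ℝ≥0∞) (H : Set V) (v : V) :
    wordSum A f z (insert v H) ≤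
      wordSum A f z H + wordSum A f z H * (loopSum A f z v * wordSum A f z H) := by
  classical
  set a : List V → ℝ≥0∞ := fun w => if ∀ x ∈ w, x ∈ H then z ^ w.length * wordWeight A f w else 0
    with ha
  set b : List V → ℝ≥0∞ := fun l => if l.head? = some v ∧ l.getLast? = some v then
    z ^ l.length * wordWeight A f l else 0 with hb
  have hpt : ∀ w : List V, (if ∀ x ∈ w, x ∈ insert v H then z ^ w.length * wordWeight A f w else 0) ≤
      a w + ∑' u, ∑' l, ∑' u', if w = u ++ (l ++ u') then a u * (b l * a u') else 0 := by
    intro w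
    by_cases hw : ∀ x ∈ w, x ∈ insert v H
    · rw [if_pos hw]
      by_cases hv : v ∈ w
      · obtain ⟨u, l, u', h, hu, hu', hl⟩ := exists_loop_decomp hv
        refine le_add_left ?_
        refine le_trans ?_ (ENNReal.le_tsum u)
        refine le_trans ?_ (ENNReal.le_tsum l)
        refine le_trans ?_ (ENNReal.le_tsum u')
        rw [if_pos h]
        have h1 : ∀ x ∈ u, x ∈ H := fun x hx => by
          rcases hw x (by rw [h]; simp [hx]) with rfl | h'
          · exact absurd hx hu
          · exact h'
        have h2 : ∀ x ∈ u', x ∈ H := fun x hx => by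
          rcases hw x (by rw [h]; simp [hx]) with rfl | h'
          · exact absurd hx hu'
          · exact h'
        simp only [ha, hb]
        rw [if_pos h1, if_pos h2, if_pos hl, h, List.length_append, List.length_append, pow_add,
          pow_add]
        calc _ ≤ z ^ u.length * (z ^ l.length * z ^ u'.length) *
              (wordWeight A f u * (wordWeight A f l * wordWeight A f u')) := by
              gcongr
              refine (wordWeight_append A f _ _).trans ?_
              gcongr
              exact wordWeight_append A f _ _
          _ = _ := by ring
      · refine le_add_right ?_
        have : ∀ x ∈ w, x ∈ H := fun x hx => by
          rcases hw x hx with rfl | h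
          · exact absurd hx hv
          · exact h
        simp only [ha]
        rw [if_pos this]
    · rw [if_neg hw]; exact zero_le
  rw [wordSum]
  refine (ENNReal.tsum_le_tsum fun w => (le_of_eq (by congr)).trans (hpt w)).trans ?_
  rw [ENNReal.tsum_add]
  refine add_le_add (le_of_eq rfl) (le_of_eq ?_)
  rw [ENNReal.tsum_comm]
  have h1 : ∀ u l : List V, ∑' w : List V, ∑' u' : List V,
      (if w = u ++ (l ++ u') then a u * (b l * a u') else 0) = a u * (b l * ∑' u', a u') := by
    intro u l
    rw [ENNReal.tsum_comm]
    simp only [tsum_ite_eq, ENNReal.tsum_mul_left]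
  have h2 : ∀ u : List V, ∑' w : List V, ∑' l : List V, ∑' u' : List V,
      (if w = u ++ (l ++ u') then a u * (b l * a u') else 0) =
        a u * ((∑' l, b l) * ∑' u', a u') := by
    intro u
    rw [ENNReal.tsum_comm]
    simp only [h1, ENNReal.tsum_mul_left, ENNReal.tsum_mul_right]
  simp only [h2, ENNReal.tsum_mul_right]
  rfl

/-- If the loop generating functions are all finite at `z`, so is the generating function of all
words. All but finitely many letters have total weight at most `1 / 2`, which handles the words
avoiding a finite set; the letters of that set are then added one at a time. -/
lemma tsum_wordWeight_ne_top {A : V → V → Prop} {f : (ℕ → V) → ℝ} {a : V → ℝ≥0∞} {z : ℝ≥0∞}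
    (ha : ∀ ω ∈ TMS A, ENNReal.ofReal (Real.exp (f ω)) ≤ a (ω 0)) (hsum : ∑' v, a v ≠ ⊤)
    (hz : z ≠ ⊤) (hloop : ∀ v, loopSum A f z v ≠ ⊤) :
    ∑' w : List V, z ^ w.length * wordWeight A f w ≠ ⊤ := by
  classical
  have hzs : ∑' v, z * a v ≠ ⊤ := by
    rw [ENNReal.tsum_mul_left]; exact ENNReal.mul_ne_top hz hsum
  obtain ⟨F, hF⟩ := ((ENNReal.tendsto_tsum_compl_atTop_zero hzs).eventually
    (gt_mem_nhds (show (0 : ℝ≥0∞) < 1 / 2 by simp))).exists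
  have hbase : wordSum A f z (↑F)ᶜ ≠ ⊤ := by
    refine ne_top_of_le_ne_top ENNReal.ofNat_ne_top (le_trans ?_ (tsum_list_prod_le
      (b := fun v => if v ∉ F then z * a v else 0) (le_trans (le_of_eq ?_) hF.le)))
    · refine ENNReal.tsum_le_tsum fun w => ?_
      split_ifs with hw
      · refine (mul_le_mul_right (wordWeight_le_prod ha w) _).trans (le_of_eq ?_)
        induction w with
        | nil => simp
        | cons v w ih =>
          have hv : v ∉ F := by simpa using hw v (by simp)
          have ih' := ih fun x hx => hw x (by simp [hx])
          simp only [List.map_cons, List.prod_cons, List.length_cons, pow_succ] at ih' ⊢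
          rw [← ih', if_pos hv]
          ring
      · exact zero_le
    · rw [← tsum_subtype_eq_of_support_subset (s := {x | x ∉ F}) ?_]
      · refine tsum_congr fun v => ?_
        have hv : (v : V) ∉ F := v.2
        rw [if_pos hv]
      · intro v hv
        by_contra h
        exact hv (if_neg h)
  have hind : ∀ F' : Finset V, wordSum A f z (↑F' ∪ (↑F)ᶜ) ≠ ⊤ := by
    intro F'
    induction F' using Finset.induction_on with
    | empty => simpa using hbase
    | insert v F' _ ih =>
      rw [Finset.coe_insert, Set.insert_union]
      exact ne_top_of_le_ne_top (ENNReal.add_ne_top.2 ⟨ih, ENNReal.mul_ne_top ih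
        (ENNReal.mul_ne_top (hloop v) ih)⟩) (wordSum_insert_le A f z _ v)
  have := hind F
  rw [Set.union_compl_self] at this
  simpa [wordSum] using this

/-- Finiteness of the word generating function at some `z = exp η > 1` makes the pressure
negative. -/
lemma pressure_neg {A : V → V → Prop} {f : (ℕ → V) → ℝ} {η : ℝ} (hη : 0 < η)
    (h : ∑' w : List V, ENNReal.ofReal (Real.exp η) ^ w.length * wordWeight A f w ≠ ⊤) :
    pressure A f < 0 := by
  set B := ∑' w : List V, ENNReal.ofReal (Real.exp η) ^ w.length * wordWeight A f w with hB
  have hZ : ∀ n, ENNReal.ofReal (Real.exp η) ^ n * pressureZ A f n ≤ B := by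
    intro n
    rw [pressureZ, ← ENNReal.tsum_mul_left]
    refine le_trans (le_of_eq ?_)
      (ENNReal.tsum_comp_le_tsum_of_injective (f := fun w : Fin n → V => List.ofFn w)
        List.ofFn_injective _)
    refine tsum_congr fun w => ?_
    rw [List.length_ofFn, wordWeight]
    have : cylL A (List.ofFn w) = cylSet A n w := by
      ext ω
      constructor
      · rintro ⟨h1, h2⟩
        exact ⟨h1, fun i => by simpa using h2 i (by simp)⟩
      · rintro ⟨h1, h2⟩
        exact ⟨h1, fun i hi => by simpa using h2 ⟨i, by simpa using hi⟩⟩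
    rw [this, List.length_ofFn]
  have hlim : ∀ᶠ n : ℕ in atTop, ((n : ℝ)⁻¹ : EReal) * elog (pressureZ A f n) ≤
      ((-(η / 2) : ℝ) : EReal) := by
    have htend : Tendsto (fun n : ℕ => Real.log (B.toReal + 1) / n) atTop (𝓝 0) :=
      tendsto_const_div_atTop_nhds_zero_nat _
    filter_upwards [htend.eventually (gt_mem_nhds (show (0 : ℝ) < η / 2 by positivity)),
      eventually_gt_atTop 0] with n hn hn0
    have hnR : (0 : ℝ) < n := by exact_mod_cast hn0
    have hinv : (0 : ℝ) < (n : ℝ)⁻¹ := inv_pos.2 hnR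
    have hcast : ((n : ℝ)⁻¹ : EReal) = (((n : ℝ)⁻¹ : ℝ) : EReal) := rfl
    have hz0 : ENNReal.ofReal (Real.exp η) ^ n ≠ 0 :=
      pow_ne_zero _ (by rw [Ne, ENNReal.ofReal_eq_zero, not_le]; exact Real.exp_pos _)
    have hZtop : pressureZ A f n ≠ ⊤ := by
      intro ht
      have := hZ n
      rw [ht, ENNReal.mul_top hz0, top_le_iff] at this
      exact h this
    rw [hcast, elog]
    split_ifs with h1
    · rw [EReal.coe_mul_bot_of_pos hinv]; exact bot_le
    · rw [← EReal.coe_mul, EReal.coe_le_coe_iff]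
      have hZp : 0 < (pressureZ A f n).toReal := ENNReal.toReal_pos h1 hZtop
      have h3 : Real.exp η ^ n * (pressureZ A f n).toReal ≤ B.toReal + 1 := by
        have := ENNReal.toReal_mono h (hZ n)
        rw [ENNReal.toReal_mul, ENNReal.toReal_pow, ENNReal.toReal_ofReal (Real.exp_pos _).le] at this
        linarith
      have h4 := Real.log_le_log (by positivity) h3
      rw [Real.log_mul (by positivity) hZp.ne', Real.log_pow, Real.log_exp] at h4
      rw [div_lt_iff₀ hnR] at hn
      rw [inv_mul_le_iff₀ hnR]
      linarith
  refine lt_of_le_of_lt (Filter.limsup_le_of_le (by isBoundedDefault) hlim) ?_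
  rw [← EReal.coe_zero, EReal.coe_lt_coe_iff]
  linarith

end Words

/-! ### Convergence of the loop generating functions -/

section LoopSums

variable {D : ℕ} {V : Type*}

/-- `l` is a word of `m + 1` letters that starts and ends with `f`. -/
def IsLoop (f : V) (m : ℕ) (l : List V) : Prop :=
  l.length = m + 1 ∧ l.head? = some f ∧ l.getLast? = some f

lemma IsLoop.ends {A : V → V → Prop} {f : V} {m : ℕ} {l : List V} (h : IsLoop f m l) {ω : ℕ → V}
    (hω : ω ∈ cylL A l) : ω 0 = f ∧ ω m = f := by
  obtain ⟨h1, h2, h3⟩ := h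
  rw [List.head?_eq_getElem?, List.getElem?_eq_getElem (by omega)] at h2
  rw [List.getLast?_eq_getElem?, List.getElem?_eq_getElem (by omega)] at h3
  refine ⟨by rw [hω.2 0 (by omega)]; simpa using h2, ?_⟩
  rw [hω.2 m (by omega)]
  simpa [h1] using h3

open Classical in
/-- If `t > dim_H K`, the `t`-weights of the loops at `f` with `m` edges sum up to at most a
distortion constant, because the weights of such loops cannot have a `t`-sum `≥ 1`. -/
lemma tsum_loops_le {G : SGIFS D V} {π : (ℕ → V) → Pt D} (k : GConst G)
    (hπ : IsCodingMap G.E G.J G.T π) (hSSC : CondSSC G.E G.J G.T (π '' TMS G.E))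
    {t : ℝ} (ht : 0 < t) (hdim : ¬ ENNReal.ofReal t ≤ dimH (π '' TMS G.E))
    {f : V} {M : ℝ} (hM : IntrinsicBound G f M) {m : ℕ} (hm : 0 < m) :
    ∑' l : List V, (if IsLoop f m l then
      ⨆ ω ∈ cylL G.E l, ENNReal.ofReal (Real.exp (t * birkhoff (phiL G.T π) m ω)) else 0) ≤
      ENNReal.ofReal (Real.exp (2 * t * k.distortion M)) := by
  rw [ENNReal.tsum_eq_iSup_sum]
  refine iSup_le fun s => ?_
  set s' := s.filter fun l => IsLoop f m l ∧ (cylL G.E l).Nonempty with hs'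
  have hloop : ∀ i : s', IsLoop f m i.1 := fun i => (Finset.mem_filter.1 i.2).2.1
  have hne : ∀ i : s', (cylL G.E i.1).Nonempty := fun i => (Finset.mem_filter.1 i.2).2.2
  choose o ho using hne
  have hdist : ∀ i : s', ∀ ω ∈ TMS G.E, (∀ j ≤ m, ω j = o i j) →
      birkhoff (phiL G.T π) m (o i) - birkhoff (phiL G.T π) m ω ≤ k.distortion M := fun i ω hω h =>
    birkhoff_sub_le k hπ m (ho i).1 hω (fun j hj => (h j hj).symm)
      (by rw [((hloop i).ends (ho i)).2]; exact hM)
  have hdist' : ∀ i : s', ∀ ω ∈ TMS G.E, (∀ j ≤ m, ω j = o i j) →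
      birkhoff (phiL G.T π) m ω - birkhoff (phiL G.T π) m (o i) ≤ k.distortion M := fun i ω hω h =>
    birkhoff_sub_le k hπ m hω (ho i).1 h
      (by rw [h m le_rfl, ((hloop i).ends (ho i)).2]; exact hM)
  have hlt : ∑ i : s', Real.exp (birkhoff (phiL G.T π) m (o i) - k.distortion M) ^ t < 1 := by
    by_contra hge
    refine hdim (le_dimH_of_loops k hπ hSSC (ℓ := o) hm (fun i => ((hloop i).ends (ho i)).1)
      (fun i => ((hloop i).ends (ho i)).2) (fun i j _ => (ho i).1 j) (fun i i' h => ?_)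
      (fun i => Real.exp_pos _) (fun i ω hω h => ?_) ht (not_lt.1 hge))
    · refine Subtype.ext (List.ext_getElem ?_ fun j h1 h2 => ?_)
      · rw [(hloop i).1, (hloop i').1]
      · rw [← (ho i).2 j h1, ← (ho i').2 j h2]
        rcases Nat.lt_or_ge j m with hj | hj
        · exact h j hj
        · have : j = m := by have := (hloop i).1; omega
          rw [this, ((hloop i).ends (ho i)).2, ((hloop i').ends (ho i')).2]
    · exact Real.exp_le_exp.2 (by linarith [hdist i ω hω h])
  calc _ ≤ ∑ l ∈ s, (if IsLoop f m l ∧ (cylL G.E l).Nonempty then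
        ⨆ ω ∈ cylL G.E l, ENNReal.ofReal (Real.exp (t * birkhoff (phiL G.T π) m ω)) else 0) := by
        refine Finset.sum_le_sum fun l _ => ?_
        by_cases h1 : IsLoop f m l
        · by_cases h2 : (cylL G.E l).Nonempty
          · rw [if_pos h1, if_pos ⟨h1, h2⟩]
          · rw [not_nonempty_iff_eq_empty] at h2
            simp [h2]
        · simp [h1]
    _ = ∑ i : s', ⨆ ω ∈ cylL G.E i.1,
          ENNReal.ofReal (Real.exp (t * birkhoff (phiL G.T π) m ω)) := by
        rw [← Finset.sum_filter, ← Finset.sum_coe_sort]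
    _ ≤ ∑ i : s', ENNReal.ofReal (Real.exp (2 * t * k.distortion M) *
          Real.exp (birkhoff (phiL G.T π) m (o i) - k.distortion M) ^ t) := by
        refine Finset.sum_le_sum fun i _ => iSup₂_le fun ω hω => ENNReal.ofReal_le_ofReal ?_
        have h := hdist' i ω hω.1 fun j hj => by
          rw [hω.2 j (by rw [(hloop i).1]; omega), (ho i).2 j (by rw [(hloop i).1]; omega)]
        rw [← Real.exp_mul, ← Real.exp_add]
        exact Real.exp_le_exp.2 (by nlinarith)
    _ = ENNReal.ofReal (Real.exp (2 * t * k.distortion M) *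
          ∑ i : s', Real.exp (birkhoff (phiL G.T π) m (o i) - k.distortion M) ^ t) := by
        rw [← ENNReal.ofReal_sum_of_nonneg fun i _ => by positivity, Finset.mul_sum]
    _ ≤ _ := ENNReal.ofReal_le_ofReal (mul_le_of_le_one_right (Real.exp_pos _).le hlt.le)

lemma birkhoff_const_mul (s : ℝ) (f : (ℕ → V) → ℝ) (m : ℕ) (ω : ℕ → V) :
    birkhoff (fun ω => s * f ω) m ω = s * birkhoff f m ω := by
  simp only [birkhoff, Finset.mul_sum]

/-- A loop generating function converges at some `z > 1` when `dim_H K < t < s`: the gap `s - t`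
yields a factor `r ^ ((s - t) m)` for the loops with `m` edges, of which `z ^ m` uses up only the
square root. -/
lemma loopSum_ne_top {G : SGIFS D V} {π : (ℕ → V) → Pt D} (k : GConst G)
    (hπ : IsCodingMap G.E G.J G.T π) (hSSC : CondSSC G.E G.J G.T (π '' TMS G.E))
    {s t : ℝ} (ht : 0 < t) (hts : t < s) (hdim : ¬ ENNReal.ofReal t ≤ dimH (π '' TMS G.E))
    {a : V → ℝ≥0∞}
    (ha : ∀ ω ∈ TMS G.E, ENNReal.ofReal (Real.exp (s * phiL G.T π ω)) ≤ a (ω 0))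
    {f : V} (haf : a f ≠ ⊤) :
    loopSum G.E (fun ω => s * phiL G.T π ω)
      (ENNReal.ofReal (Real.exp ((s - t) * -Real.log k.r / 2))) f ≠ ⊤ := by
  classical
  obtain ⟨M, hM⟩ := exists_intrinsicBound k f
  set η := (s - t) * -Real.log k.r / 2 with hη
  have hη0 : 0 < η := by
    have := Real.log_neg k.r_pos k.r_lt
    have : 0 < (s - t) * -Real.log k.r := mul_pos (by linarith) (by linarith)
    rw [hη]; linarith
  set z := ENNReal.ofReal (Real.exp η) with hz
  set W : ℕ → List V → ℝ≥0∞ := fun m l =>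
    ⨆ ω ∈ cylL G.E l, ENNReal.ofReal (Real.exp (t * birkhoff (phiL G.T π) m ω)) with hW
  set q := ENNReal.ofReal (Real.exp (-η)) with hq
  set B := ENNReal.ofReal (Real.exp (2 * t * k.distortion M)) + 1 with hB
  have hsumW : ∀ m, ∑' l : List V, (if IsLoop f m l then W m l else 0) ≤ B := by
    intro m
    rcases Nat.eq_zero_or_pos m with rfl | hm
    · refine le_add_left ?_
      calc _ ≤ ∑' l : List V, (if l = [f] then (1 : ℝ≥0∞) else 0) := by
            refine ENNReal.tsum_le_tsum fun l => ?_
            by_cases h : IsLoop f 0 l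
            · have hl : l = [f] := by
                obtain ⟨h1, h2, -⟩ := h
                obtain ⟨x, rfl⟩ := List.length_eq_one_iff.1 h1
                simpa using h2
              rw [if_pos h, if_pos hl]
              exact iSup₂_le fun ω _ => by simp [birkhoff]
            · rw [if_neg h]; exact zero_le
        _ = 1 := by rw [tsum_ite_eq]
    · exact (tsum_loops_le k hπ hSSC ht hdim hM hm).trans (le_add_right le_rfl)
  have hweight : ∀ m l, IsLoop f m l → z ^ l.length * wordWeight G.E (fun ω => s * phiL G.T π ω) l ≤
      z * a f * (q ^ m * W m l) := by
    intro m l h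
    have h1 : wordWeight G.E (fun ω => s * phiL G.T π ω) l ≤ q ^ m * (q ^ m * W m l) * a f := by
      refine iSup₂_le fun ω hω => ?_
      rw [h.1, birkhoff_add, Real.exp_add, ENNReal.ofReal_mul (Real.exp_pos _).le,
        birkhoff_const_mul]
      refine mul_le_mul' ?_ ?_
      · have h2 : s * birkhoff (phiL G.T π) m ω ≤
            m * -η + (m * -η + t * birkhoff (phiL G.T π) m ω) := by
          have := mul_le_mul_of_nonneg_left (birkhoff_phiL_le k hπ m hω.1)
            (show 0 ≤ s - t by linarith)
          rw [hη]; linarith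
        refine (ENNReal.ofReal_le_ofReal (Real.exp_le_exp.2 h2)).trans ?_
        rw [Real.exp_add, Real.exp_add, ENNReal.ofReal_mul (Real.exp_pos _).le,
          ENNReal.ofReal_mul (Real.exp_pos _).le, Real.exp_nat_mul,
          ENNReal.ofReal_pow (Real.exp_pos _).le]
        gcongr
        exact le_iSup₂_of_le (f := fun ω (_ : ω ∈ cylL G.E l) =>
          ENNReal.ofReal (Real.exp (t * birkhoff (phiL G.T π) m ω))) ω hω le_rfl
      · have h2 := ha _ (shift_iterate_mem_TMS hω.1 m)
        rw [shift_iterate_apply, zero_add, (h.ends hω).2] at h2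
        simpa [birkhoff] using h2
    have hzq : z * q = 1 := by
      rw [hz, hq, ← ENNReal.ofReal_mul (Real.exp_pos _).le, ← Real.exp_add]; simp
    calc _ ≤ z ^ l.length * (q ^ m * (q ^ m * W m l) * a f) := by gcongr
      _ = (z * q) ^ m * (z * a f * (q ^ m * W m l)) := by rw [h.1]; ring
      _ = _ := by rw [hzq, one_pow, one_mul]
  have hle : loopSum G.E (fun ω => s * phiL G.T π ω) z f ≤ z * a f * ((∑' m : ℕ, q ^ m) * B) := by
    calc _ ≤ ∑' l : List V, ∑' m : ℕ, z * a f * (q ^ m * if IsLoop f m l then W m l else 0) := by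
          refine ENNReal.tsum_le_tsum fun l => ?_
          split_ifs with h
          · have hlen : l.length ≠ 0 := fun h0 => by
              rw [List.length_eq_zero_iff] at h0
              simp [h0] at h
            have hL : IsLoop f (l.length - 1) l := ⟨by omega, h⟩
            refine le_trans ?_ (ENNReal.le_tsum (l.length - 1))
            rw [if_pos hL]
            exact hweight _ _ hL
          · exact zero_le
      _ = ∑' m : ℕ, z * a f * (q ^ m * ∑' l : List V, if IsLoop f m l then W m l else 0) := by
          rw [ENNReal.tsum_comm]
          simp only [ENNReal.tsum_mul_left]
      _ ≤ ∑' m : ℕ, z * a f * (q ^ m * B) := by gcongr with m; exact hsumW m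
      _ = _ := by rw [ENNReal.tsum_mul_left, ENNReal.tsum_mul_right]
  refine ne_top_of_le_ne_top (ENNReal.mul_ne_top (ENNReal.mul_ne_top ENNReal.ofReal_ne_top haf)
    (ENNReal.mul_ne_top ?_ (by simp [hB]))) hle
  have hq1 : q < 1 := by
    rw [hq, ← ENNReal.ofReal_one]
    exact (ENNReal.ofReal_lt_ofReal_iff one_pos).2 (by simpa using hη0)
  rw [ENNReal.tsum_geometric, Ne, ENNReal.inv_eq_top, tsub_eq_zero_iff_le, not_le]
  exact hq1

end LoopSums

/-- Lower estimate of the Hausdorff dimension of the limit set of a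
simple GIFS satisfying `(G.6)_S`, `(G.7)_B`, `(G.7)_{BI}` and `(G.8)_{SV}`:
`s̲ = inf {s ≥ 0 : P(sφ̲) ≤ 0} ≤ dim_H K`. -/
theorem dimH_limit_set_lower
    {D : ℕ} {V : Type*} [Countable V] (G : SGIFS D V)
    (π : (ℕ → V) → Pt D) (hπ : IsCodingMap G.E G.J G.T π)
    (hSSC : CondSSC G.E G.J G.T (π '' TMS G.E))
    (hBD : CondBD G.E G.O G.T)
    (hBDI : CondBDI G.E G.O G.T)
    (hG8 : CondG8 G.E G.J G.T π) :
    (⨅ (s : ℝ) (_ : 0 ≤ s)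
        (_ : pressure G.E (fun ω => s * phiL G.T π ω) ≤ (0 : EReal)),
        ENNReal.ofReal s) ≤ dimH (π '' TMS G.E) := by
  obtain ⟨s, ⟨hs0, hsum⟩, hP⟩ := hG8
  rcases eq_or_ne D 0 with rfl | hD
  · -- On the zero space `inorm` vanishes, so `phiL = log 0 = 0` and `s = 0` is admissible.
    have hphi : ∀ ω, phiL G.T π ω = 0 := by
      intro ω
      have : ∀ A : Pt 0 →L[ℝ] Pt 0, inorm A = 0 := fun A => by
        rw [inorm, Subsingleton.elim (Ring.inverse A) 0, norm_zero, inv_zero]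
      rw [phiL, this, Real.log_zero]
    refine (iInf_le_of_le (0 : ℝ) (iInf_le_of_le le_rfl (iInf_le_of_le ?_ le_rfl))).trans (by simp)
    simp only [hphi, mul_zero] at hP ⊢
    exact hP.le
  obtain ⟨k⟩ := exists_gconst G hD hBDI
  refine (iInf_le_of_le s (iInf_le_of_le hs0 (iInf_le_of_le hP.le le_rfl))).trans ?_
  refine le_of_forall_lt_imp_le_of_dense fun x hx => ?_
  have hxtop : x ≠ ⊤ := hx.ne_top
  rw [← ENNReal.ofReal_toReal hxtop] at hx ⊢
  rcases (ENNReal.toReal_nonneg (a := x)).eq_or_lt with h0 | ht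
  · simp [← h0]
  have hts : x.toReal < s := (ENNReal.ofReal_lt_ofReal_iff_of_nonneg ht.le).1 hx
  by_contra hdim
  set a : V → ℝ≥0∞ := fun v => ⨆ (u : V) (_ : G.E v u) (x : Pt D)
    (_ : x ∈ π '' TMS G.E ∩ G.J u), ENNReal.ofReal (inorm (fderiv ℝ (G.T v u) x) ^ s) with ha
  have hbound : ∀ ω ∈ TMS G.E, ENNReal.ofReal (Real.exp (s * phiL G.T π ω)) ≤ a (ω 0) := by
    intro ω hω
    have hJ := coding_mem_J hπ (shift_mem_TMS hω)
    have hpos : 0 < inorm (fderiv ℝ (G.T (ω 0) (ω 1)) (π (shift ω))) :=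
      k.inorm_pos (hω 0) (k.J_sub_O _ hJ)
    refine le_trans (le_of_eq ?_) (le_iSup₂_of_le (ω 1) (hω 0) (le_iSup₂_of_le (π (shift ω))
      ⟨mem_image_of_mem _ (shift_mem_TMS hω), hJ⟩ le_rfl))
    rw [Real.rpow_def_of_pos hpos, mul_comm]
    rfl
  have hη : 0 < (s - x.toReal) * -Real.log k.r / 2 := by
    have := Real.log_neg k.r_pos k.r_lt
    exact half_pos (mul_pos (by linarith) (by linarith))
  have hneg := pressure_neg hη (tsum_wordWeight_ne_top hbound hsum ENNReal.ofReal_ne_top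
    fun f => loopSum_ne_top k hπ hSSC ht hts hdim hbound (ENNReal.ne_top_of_tsum_ne_top hsum f))
  exact absurd hP hneg.ne
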